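/- arXiv:math/0304056 — 5 statements merged into one kernel-verified Lean document; each statement's English description precedes it below -/
import Mathlib

section
/- Suppose the chain is geometrically ergodic: there exist C > 0 and 0 < r < 1 such that ∫_S |λ^{(n)}(x,y) − m(y)| ψ(dy) ≤ C r^n for all x and all n ≥ 1. Let f : S → ℝ be bounded measurable and set f°(x) = f(x) − ∫_S f(z) m(z) ψ(dz). Then the series g(x) = f°(x) + Σ_{n≥1} ∫_S f°(y) λ^{(n)}(x,y) ψ(dy) converges, g is bounded (|g(x)| ≤ ‖f°‖_∞ (1 + C r/(1−r))), and g solves the Poisson equation g(x) = f°(x) + ∫_S g(y) λ(x,y) ψ(dy). -/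
open MeasureTheory Filter

/-!
Write `P h x = ∫ h y * lam x y ∂ψ` for the transition operator. By Fubini,
`∫ h y * Lam (n + 1) x y ∂ψ = ∫ P h z * Lam n x z ∂ψ` for bounded measurable `h`, whence by
induction `∫ h y * Lam (n + 1) x y ∂ψ = P^(n+1) h x` (`integral_mul_step_eq_iterate`). So the
series is the Neumann series `g = ∑ P^n fc`. Since `fc` is centred under `m`, its terms satisfy
`|P^(n+1) fc x| = |∫ fc y * (Lam (n + 1) x y - m y) ∂ψ| ≤ C0 * C * r ^ (n + 1)` by geometric
ergodicity (`abs_integral_mul_le_of_centred`). This geometric bound yields summability and the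
estimate on `g`; it also lets the sum be exchanged with `P`, which turns the Neumann series into
the Poisson equation.
-/

/-- The transition operator `h ↦ ∫ h y * lam · y ∂ψ` of a chain with transition density `lam`. -/
noncomputable def transOp {S : Type*} [MeasurableSpace S] (ψ : Measure S) (lam : S → S → ℝ)
    (h : S → ℝ) (x : S) : ℝ := ∫ y, h y * lam x y ∂ψ

section

variable {S : Type*} [MeasurableSpace S] {ψ : Measure S}

lemma integrable_bdd_mul {h k : S → ℝ} (hh : Measurable h) {M : ℝ} (hM : ∀ x, |h x| ≤ M)
    (hk : Integrable k ψ) : Integrable (fun y => h y * k y) ψ :=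
  hk.bdd_mul hh.aestronglyMeasurable (Eventually.of_forall hM)

lemma abs_integral_bdd_mul_le {h k : S → ℝ} {M : ℝ} (hM : ∀ x, |h x| ≤ M)
    (hk : Integrable k ψ) : |∫ y, h y * k y ∂ψ| ≤ M * ∫ y, |k y| ∂ψ := by
  rw [← integral_const_mul, ← Real.norm_eq_abs]
  refine norm_integral_le_of_norm_le (hk.abs.const_mul M) (Eventually.of_forall fun y => ?_)
  rw [Real.norm_eq_abs, abs_mul]
  exact mul_le_mul_of_nonneg_right (hM y) (abs_nonneg _)

/-- Integrating a function centred under `m` against `k` only sees the difference `k - m`. -/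
lemma abs_integral_mul_le_of_centred {h k m : S → ℝ} (hh : Measurable h) {M : ℝ}
    (hM : ∀ x, |h x| ≤ M) (hk : Integrable k ψ) (hm : Integrable m ψ)
    (hc : ∫ y, h y * m y ∂ψ = 0) :
    |∫ y, h y * k y ∂ψ| ≤ M * ∫ y, |k y - m y| ∂ψ := by
  have e : ∫ y, h y * k y ∂ψ = ∫ y, h y * (k y - m y) ∂ψ := by
    simp_rw [mul_sub]
    rw [integral_sub (integrable_bdd_mul hh hM hk) (integrable_bdd_mul hh hM hm), hc, sub_zero]
  rw [e]
  exact abs_integral_bdd_mul_le hM (hk.sub hm)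

variable [SigmaFinite ψ] {lam : S → S → ℝ}

lemma measurable_transOp (hlam_meas : Measurable (Function.uncurry lam)) {h : S → ℝ}
    (hh : Measurable h) : Measurable (transOp ψ lam h) := by
  have : StronglyMeasurable (Function.uncurry fun x y => h y * lam x y) :=
    ((hh.comp measurable_snd).mul hlam_meas).stronglyMeasurable
  exact this.integral_prod_right.measurable

variable (hlam_meas : Measurable (Function.uncurry lam)) (hlam_nonneg : ∀ x y, 0 ≤ lam x y)
  (hlam_kernel : ∀ x, ∫ y, lam x y ∂ψ = 1)

omit [SigmaFinite ψ] in
lemma integrable_of_integral_one {k : S → ℝ} (hk : ∫ y, k y ∂ψ = 1) : Integrable k ψ :=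
  Integrable.of_integral_ne_zero (by rw [hk]; exact one_ne_zero)

omit [SigmaFinite ψ] in
include hlam_nonneg hlam_kernel in
lemma abs_transOp_le {h : S → ℝ} {M : ℝ} (hM : ∀ x, |h x| ≤ M) (x : S) :
    |transOp ψ lam h x| ≤ M := by
  have := abs_integral_bdd_mul_le hM (integrable_of_integral_one (hlam_kernel x))
  simpa [transOp, abs_of_nonneg (hlam_nonneg x _), hlam_kernel x] using this

include hlam_meas hlam_nonneg hlam_kernel in
lemma integrable_prod_step {k h : S → ℝ} (hk : Measurable k) (hki : Integrable k ψ)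
    (hh : Measurable h) {M : ℝ} (hM : ∀ x, |h x| ≤ M) :
    Integrable (Function.uncurry fun z y => h y * (k z * lam z y)) (ψ.prod ψ) := by
  have base : Integrable (fun p : S × S => k p.1 * lam p.1 p.2) (ψ.prod ψ) := by
    have hmeas : Measurable fun p : S × S => k p.1 * lam p.1 p.2 :=
      (hk.comp measurable_fst).mul hlam_meas
    rw [integrable_prod_iff hmeas.aestronglyMeasurable]
    refine ⟨Eventually.of_forall fun z =>
      (integrable_of_integral_one (hlam_kernel z)).const_mul (k z), ?_⟩
    simp only [norm_mul, Real.norm_eq_abs, abs_of_nonneg (hlam_nonneg _ _), integral_const_mul,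
      hlam_kernel, mul_one]
    exact hki.abs
  exact base.bdd_mul (c := M) (hh.comp measurable_snd).aestronglyMeasurable
    (Eventually.of_forall fun p => hM p.2)

include hlam_meas hlam_nonneg hlam_kernel in
/-- Duality: testing the density `∫ k z * lam z · ∂ψ` against `h` is testing `k` against
`transOp ψ lam h`. The density may take the junk value `0` on a null set, where the defining
integral diverges; this does not affect the outer integral. -/
lemma integral_mul_step {k h : S → ℝ} (hk : Measurable k) (hki : Integrable k ψ)
    (hh : Measurable h) {M : ℝ} (hM : ∀ x, |h x| ≤ M) :
    ∫ y, h y * (∫ z, k z * lam z y ∂ψ) ∂ψ = ∫ z, transOp ψ lam h z * k z ∂ψ := by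
  simp_rw [← integral_const_mul]
  rw [← integral_integral_swap
    (integrable_prod_step hlam_meas hlam_nonneg hlam_kernel hk hki hh hM)]
  refine integral_congr_ae (Eventually.of_forall fun z => ?_)
  simp only [transOp]
  rw [← integral_mul_const]
  congr 1
  ext y
  ring

variable {Lam : ℕ → S → S → ℝ} (hLam1 : Lam 1 = lam)
  (hLam_rec : ∀ n, 1 ≤ n → ∀ u x, Lam (n + 1) u x = ∫ z, Lam n u z * lam z x ∂ψ)

include hlam_meas hlam_nonneg hlam_kernel hLam1 hLam_rec in
lemma step_density (u : S) (n : ℕ) :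
    Measurable (Lam (n + 1) u) ∧ Integrable (Lam (n + 1) u) ψ := by
  induction n with
  | zero =>
    simp only [zero_add, hLam1]
    exact ⟨hlam_meas.of_uncurry_left, integrable_of_integral_one (hlam_kernel u)⟩
  | succ n ih =>
    have e : Lam (n + 1 + 1) u = fun x => ∫ z, Lam (n + 1) u z * lam z x ∂ψ :=
      funext fun x => hLam_rec (n + 1) (by omega) u x
    rw [e]
    constructor
    · have : StronglyMeasurable (Function.uncurry fun z x => Lam (n + 1) u z * lam z x) :=
        ((ih.1.comp measurable_fst).mul hlam_meas).stronglyMeasurable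
      exact this.integral_prod_left.measurable
    · have := integrable_prod_step hlam_meas hlam_nonneg hlam_kernel ih.1 ih.2
        (h := fun _ => 1) measurable_const (M := 1) (by simp)
      simpa [Function.uncurry] using this.integral_prod_right

include hlam_meas hlam_nonneg hlam_kernel hLam1 hLam_rec in
/-- The `n`-step density represents the `n`-th power of the transition operator. -/
lemma integral_mul_step_eq_iterate (x : S) (n : ℕ) {M : ℝ} {h : S → ℝ} (hh : Measurable h)
    (hM : ∀ x, |h x| ≤ M) :
    ∫ y, h y * Lam (n + 1) x y ∂ψ = (transOp ψ lam)^[n + 1] h x := by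
  induction n generalizing h with
  | zero => simp [hLam1, transOp]
  | succ n ih =>
    obtain ⟨hk, hki⟩ := step_density hlam_meas hlam_nonneg hlam_kernel hLam1 hLam_rec x n
    rw [Function.iterate_succ_apply, ← ih (measurable_transOp hlam_meas hh)
      (abs_transOp_le hlam_nonneg hlam_kernel hM),
      ← integral_mul_step hlam_meas hlam_nonneg hlam_kernel hk hki hh hM]
    simp_rw [hLam_rec (n + 1) (by omega)]

end

/-- The Poisson equation: under geometric ergodicity, the series defining g converges,
g is bounded by ‖f°‖_∞ (1 + C r/(1−r)), and g solves g = f° + ∫ g(y) λ(·,y) ψ(dy). -/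
theorem poisson_equation_solution
    {S : Type*} [MeasurableSpace S] (ψ : Measure S) [SigmaFinite ψ]
    (lam : S → S → ℝ)
    (hlam_meas : Measurable (Function.uncurry lam))
    (hlam_nonneg : ∀ x y, 0 ≤ lam x y)
    (hlam_kernel : ∀ x, ∫ y, lam x y ∂ψ = 1)
    (Lam : ℕ → S → S → ℝ)
    (hLam1 : Lam 1 = lam)
    (hLam_rec : ∀ n, 1 ≤ n → ∀ u x, Lam (n + 1) u x = ∫ z, Lam n u z * lam z x ∂ψ)
    (m : S → ℝ) (hm_meas : Measurable m) (hm_nonneg : ∀ x, 0 ≤ m x)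
    (hm_prob : ∫ x, m x ∂ψ = 1)
    (hm_inv : ∀ᵐ y ∂ψ, m y = ∫ x, lam x y * m x ∂ψ)
    (C r : ℝ) (hC : 0 < C) (hr0 : 0 < r) (hr1 : r < 1)
    (hgeo : ∀ x : S, ∀ n : ℕ, 1 ≤ n → ∫ y, |Lam n x y - m y| ∂ψ ≤ C * r ^ n)
    (f : S → ℝ) (hf_meas : Measurable f) (Mf : ℝ) (hMf : ∀ x, |f x| ≤ Mf) :
    let fc : S → ℝ := fun x => f x - ∫ z, f z * m z ∂ψ
    let g : S → ℝ := fun x => fc x + ∑' n : ℕ, ∫ y, fc y * Lam (n + 1) x y ∂ψ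
    (∀ x : S, Summable (fun n : ℕ => ∫ y, fc y * Lam (n + 1) x y ∂ψ)) ∧
    (∀ C0 : ℝ, (∀ x, |fc x| ≤ C0) → ∀ x, |g x| ≤ C0 * (1 + C * r / (1 - r))) ∧
    (∀ x, g x = fc x + ∫ y, g y * lam x y ∂ψ) := by
  intro fc g
  have hmi : Integrable m ψ := integrable_of_integral_one hm_prob
  have hfc_meas : Measurable fc := hf_meas.sub_const _
  have hfc_bdd : ∀ x, |fc x| ≤ Mf + |∫ z, f z * m z ∂ψ| := fun x =>
    (abs_sub _ _).trans (add_le_add_left (hMf x) _)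
  have hfc_centred : ∫ y, fc y * m y ∂ψ = 0 := by
    simp only [fc, sub_mul]
    rw [integral_sub (integrable_bdd_mul hf_meas hMf hmi) (hmi.const_mul _),
      integral_const_mul, hm_prob, mul_one, sub_self]
  have hterm : ∀ C0 : ℝ, (∀ x, |fc x| ≤ C0) → ∀ x n,
      |∫ y, fc y * Lam (n + 1) x y ∂ψ| ≤ C0 * (C * r ^ (n + 1)) := by
    intro C0 hC0 x n
    have hki := (step_density hlam_meas hlam_nonneg hlam_kernel hLam1 hLam_rec x n).2
    exact (abs_integral_mul_le_of_centred hfc_meas hC0 hki hmi hfc_centred).trans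
      (mul_le_mul_of_nonneg_left (hgeo x (n + 1) (by omega)) ((abs_nonneg _).trans (hC0 x)))
  have hgeom : ∀ C0 : ℝ,
      HasSum (fun n : ℕ => C0 * (C * r ^ (n + 1))) (C0 * (C * r / (1 - r))) := by
    intro C0
    have h := (hasSum_geometric_of_lt_one hr0.le hr1).mul_left (C0 * (C * r))
    rw [mul_assoc, ← div_eq_mul_inv] at h
    refine h.congr_fun fun n => ?_
    ring
  have hsum : ∀ x : S, Summable (fun n : ℕ => ∫ y, fc y * Lam (n + 1) x y ∂ψ) := fun x =>
    Summable.of_norm_bounded (hgeom _).summable (hterm _ hfc_bdd x)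
  refine ⟨hsum, fun C0 hC0 x => ?_, fun x => ?_⟩
  · have hs : |∑' n : ℕ, ∫ y, fc y * Lam (n + 1) x y ∂ψ| ≤ C0 * (C * r / (1 - r)) :=
      tsum_of_norm_bounded (E := ℝ) (hgeom C0) fun n => hterm C0 hC0 x n
    calc |g x| ≤ |fc x| + |∑' n : ℕ, ∫ y, fc y * Lam (n + 1) x y ∂ψ| := abs_add_le _ _
      _ ≤ C0 + C0 * (C * r / (1 - r)) := add_le_add (hC0 x) hs
      _ = C0 * (1 + C * r / (1 - r)) := by ring
  · set P := transOp ψ lam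
    set K := Mf + |∫ z, f z * m z ∂ψ|
    have hiter : ∀ x n, ∫ y, fc y * Lam (n + 1) x y ∂ψ = P^[n + 1] fc x := fun x n =>
      integral_mul_step_eq_iterate hlam_meas hlam_nonneg hlam_kernel hLam1 hLam_rec x n
        hfc_meas hfc_bdd
    have hPmeas : ∀ n, Measurable (P^[n] fc) := fun n => by
      induction n with
      | zero => exact hfc_meas
      | succ n ih =>
        rw [Function.iterate_succ_apply']
        exact measurable_transOp hlam_meas ih
    have hPbdd : ∀ n y, |P^[n + 1] fc y| ≤ K * (C * r ^ (n + 1)) := fun n y => by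
      rw [← hiter]
      exact hterm K hfc_bdd y n
    have hlx : Integrable (lam x) ψ := integrable_of_integral_one (hlam_kernel x)
    have hint : ∀ n, Integrable (fun y => P^[n + 1] fc y * lam x y) ψ := fun n =>
      integrable_bdd_mul (hPmeas _) (hPbdd n) hlx
    have hnorm : Summable fun n : ℕ => ∫ y, ‖P^[n + 1] fc y * lam x y‖ ∂ψ := by
      refine Summable.of_nonneg_of_le (fun n => integral_nonneg fun y => norm_nonneg _)
        (fun n => ?_) (hgeom K).summable
      calc ∫ y, ‖P^[n + 1] fc y * lam x y‖ ∂ψ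
          ≤ ∫ y, K * (C * r ^ (n + 1)) * lam x y ∂ψ := by
            refine integral_mono (hint n).norm (hlx.const_mul _) fun y => ?_
            simp only [norm_mul, Real.norm_eq_abs, abs_of_nonneg (hlam_nonneg x y)]
            exact mul_le_mul_of_nonneg_right (hPbdd n y) (hlam_nonneg x y)
        _ = K * (C * r ^ (n + 1)) := by rw [integral_const_mul, hlam_kernel, mul_one]
    have hswap := hasSum_integral_of_summable_integral_norm hint hnorm
    have hsumP : ∀ x, Summable fun n : ℕ => P^[n + 1] fc x := fun x => by
      simpa only [hiter] using hsum x
    have hg : ∀ x, g x = fc x + ∑' n : ℕ, P^[n + 1] fc x := fun x => by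
      simp only [g, hiter]
    have htail_int : Integrable (fun y => ∑' n : ℕ, P^[n + 1] fc y * lam x y) ψ := by
      simp_rw [tsum_mul_right]
      refine integrable_bdd_mul (M := K * (C * r / (1 - r)))
        (Measurable.tsum fun n => hPmeas (n + 1)) (fun y => ?_) hlx
      exact tsum_of_norm_bounded (E := ℝ) (hgeom K) fun n => hPbdd n y
    have hPg : ∫ y, g y * lam x y ∂ψ = P fc x + ∑' n : ℕ, P^[n + 1 + 1] fc x := by
      simp_rw [hg, add_mul, ← tsum_mul_right]
      rw [integral_add (integrable_bdd_mul hfc_meas hfc_bdd hlx) htail_int, ← hswap.tsum_eq]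
      simp_rw [Function.iterate_succ_apply' P (_ + 1)]
      rfl
    rw [hPg, hg, (hsumP x).tsum_eq_zero_add]
    rfl
end

section
/- Assume λ_⋄ > 0 and λ* < ∞, let f : S → ℝ be bounded measurable, f°(x) = f(x) − ∫ f m dψ, and let g be the bounded solution of the Poisson equation g(x) = f°(x) + ∫_S g(y) λ(x,y) ψ(dy). Then the sequence ξ_n = π_n⟨g⟩ − π_{n−1}⟨g⟩ + π_{n−1}⟨f°⟩, n ≥ 1, is a bounded martingale-difference sequence with respect to the observation filtration: |ξ_n| is uniformly bounded and E(ξ_n | Y_1, …, Y_{n−1}) = 0 a.s. -/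
/-!
The increment identity behind the result is the Poisson equation in the form `g - f° = K g`,
where `K g x = ∫ g y * lam x y ∂ψ` is the transition operator. By the tower property,
`E(ξₙ | 𝒢 (n-1)) = E(g (Xₙ) - g (Xₙ₋₁) + f° (Xₙ₋₁) | 𝒢 (n-1))
  = E(g (Xₙ) - K g (Xₙ₋₁) | 𝒢 (n-1))`,
which vanishes because the Markov property, conditionally on the past of both the chain and the
observations, holds in particular on every event of the coarser σ-algebra `𝒢 (n-1)`.
The Markov property is given for indicators; `integral_comp_eq_integral_kernel` passes to bounded
functions by identifying the law of the next state with a composition of measure and kernel.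
Boundedness of `ξ` is the contraction property of conditional expectations in `L^∞`.
-/

open MeasureTheory Filter

/-- A transition identity known on indicators extends to bounded measurable functions: if
`P(Z ∈ A) = ∫ η ω A dμ` for all measurable `A`, then the law of `Z` is `η ∘ μ`. -/
lemma integral_comp_eq_integral_kernel
    {Ω S : Type*} [MeasurableSpace Ω] [MeasurableSpace S] (μ : Measure Ω) [IsFiniteMeasure μ]
    (η : ProbabilityTheory.Kernel Ω S) [ProbabilityTheory.IsMarkovKernel η]
    (Z : Ω → S) (hZ : Measurable Z)
    (h : ∀ A : Set S, MeasurableSet A →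
      ∫ ω, Set.indicator A (fun _ => (1 : ℝ)) (Z ω) ∂μ = ∫ ω, (η ω).real A ∂μ)
    (g : S → ℝ) (hg : Measurable g) (M : ℝ) (hM : ∀ x, |g x| ≤ M) :
    ∫ ω, g (Z ω) ∂μ = ∫ ω, ∫ y, g y ∂(η ω) ∂μ := by
  -- The measure `μ` is viewed as a kernel from a point, so that `Kernel.integral_comp` applies.
  let κ : ProbabilityTheory.Kernel Unit Ω := ProbabilityTheory.Kernel.const Unit μ
  have key : μ.map Z = (η.comp κ) () := by
    ext A hA
    rw [ProbabilityTheory.Kernel.comp_apply' _ _ _ hA, Measure.map_apply hZ hA]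
    have h1 := h A hA
    have h2 : ∫ ω, Set.indicator A (fun _ => (1 : ℝ)) (Z ω) ∂μ = (μ (Z ⁻¹' A)).toReal := by
      have : (fun ω => Set.indicator A (fun _ => (1 : ℝ)) (Z ω))
          = Set.indicator (Z ⁻¹' A) (fun _ => (1 : ℝ)) := rfl
      rw [this, integral_indicator_const _ (hZ hA)]
      simp [Measure.real]
    have h3 : ∫ ω, (η ω).real A ∂μ = (∫⁻ ω, η ω A ∂μ).toReal :=
      integral_toReal (η.measurable_coe hA).aemeasurable
        (Eventually.of_forall fun ω => measure_lt_top _ _)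
    rw [h2, h3] at h1
    refine (ENNReal.toReal_eq_toReal_iff' (measure_ne_top _ _) ?_).1 h1
    have : ∫⁻ ω, η ω A ∂μ ≤ ∫⁻ _, 1 ∂μ := lintegral_mono fun ω => prob_le_one
    refine ne_top_of_le_ne_top ?_ this
    simp
  have hint : Integrable g ((η.comp κ) ()) := by
    rw [← key]
    exact Integrable.of_bound hg.aestronglyMeasurable M (Eventually.of_forall hM)
  have := ProbabilityTheory.Kernel.integral_comp hint
  rw [← key, integral_map hZ.aemeasurable hg.aestronglyMeasurable] at this
  simpa [κ] using this

/-- The density form of `integral_comp_eq_integral_kernel`. -/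
lemma integral_comp_eq_integral_density
    {Ω S : Type*} [MeasurableSpace Ω] [MeasurableSpace S] (μ : Measure Ω) [IsFiniteMeasure μ]
    (ψ : Measure S) [SigmaFinite ψ] (lam : S → S → ℝ)
    (hlam_meas : Measurable (Function.uncurry lam))
    (hlam_nonneg : ∀ x y, 0 ≤ lam x y)
    (hlam_kernel : ∀ x, ∫ y, lam x y ∂ψ = 1)
    (X Z : Ω → S) (hX : Measurable X) (hZ : Measurable Z)
    (h : ∀ A : Set S, MeasurableSet A →
      ∫ ω, Set.indicator A (fun _ => (1 : ℝ)) (Z ω) ∂μ = ∫ ω, ∫ y in A, lam (X ω) y ∂ψ ∂μ)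
    (g : S → ℝ) (hg : Measurable g) (M : ℝ) (hM : ∀ x, |g x| ≤ M) :
    ∫ ω, g (Z ω) ∂μ = ∫ ω, ∫ y, g y * lam (X ω) y ∂ψ ∂μ := by
  have hd : Measurable (Function.uncurry fun ω y => ENNReal.ofReal (lam (X ω) y)) :=
    (hlam_meas.comp ((hX.comp measurable_fst).prodMk measurable_snd)).ennreal_ofReal
  let η : ProbabilityTheory.Kernel Ω S :=
    (ProbabilityTheory.Kernel.const Ω ψ).withDensity fun ω y => ENNReal.ofReal (lam (X ω) y)
  have hη : ∀ ω, η ω = ψ.withDensity fun y => ENNReal.ofReal (lam (X ω) y) := fun ω =>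
    ProbabilityTheory.Kernel.withDensity_apply _ hd ω
  have hmeas : ∀ x, Measurable (lam x) := fun x => hlam_meas.of_uncurry_left
  -- A density with Bochner integral `1` is integrable, since otherwise the integral would be `0`.
  have hint : ∀ x, Integrable (lam x) ψ := fun x =>
    Integrable.of_integral_ne_zero (by rw [hlam_kernel x]; exact one_ne_zero)
  have hreal : ∀ ω (A : Set S), MeasurableSet A → (η ω) A
      = ENNReal.ofReal (∫ y in A, lam (X ω) y ∂ψ) := fun ω A hA => by
    rw [hη, withDensity_apply _ hA,
      ofReal_integral_eq_lintegral_ofReal (hint _).integrableOn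
        (Eventually.of_forall fun y => hlam_nonneg _ y)]
  have : ProbabilityTheory.IsMarkovKernel η := ⟨fun ω => ⟨by
    rw [hreal ω _ MeasurableSet.univ, setIntegral_univ, hlam_kernel, ENNReal.ofReal_one]⟩⟩
  rw [integral_comp_eq_integral_kernel μ η Z hZ (fun A hA => ?_) g hg M hM]
  · refine integral_congr_ae (Eventually.of_forall fun ω => ?_)
    simp only
    rw [hη, integral_withDensity_eq_integral_toReal_smul (hmeas _).ennreal_ofReal
      (Eventually.of_forall fun y => ENNReal.ofReal_lt_top)]
    refine integral_congr_ae (Eventually.of_forall fun y => ?_)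
    simp only [ENNReal.toReal_ofReal (hlam_nonneg _ y), smul_eq_mul, mul_comm]
  · rw [h A hA]
    refine integral_congr_ae (Eventually.of_forall fun ω => ?_)
    simp only [Measure.real]
    rw [hreal ω A hA, ENNReal.toReal_ofReal (integral_nonneg fun y => hlam_nonneg _ y)]

/-- ξₙ = πₙ⟨g⟩ − πₙ₋₁⟨g⟩ + πₙ₋₁⟨f°⟩ is a bounded martingale-difference sequence
with respect to the observation filtration. -/
theorem poisson_martingale_difference
    {Ω : Type*} [MeasurableSpace Ω] (μ : Measure Ω) [IsProbabilityMeasure μ]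
    {S : Type*} [MeasurableSpace S] (ψ : Measure S) [SigmaFinite ψ]
    {p : ℕ} (θ : Measure (Fin p → ℝ)) [SigmaFinite θ]
    (X : ℕ → Ω → S) (Y : ℕ → Ω → (Fin p → ℝ))
    (hX : ∀ n, Measurable (X n)) (hY : ∀ n, Measurable (Y n))
    (lam : S → S → ℝ)
    (hlam_meas : Measurable (Function.uncurry lam))
    (hlam_nonneg : ∀ x y, 0 ≤ lam x y)
    (hlam_kernel : ∀ x, ∫ y, lam x y ∂ψ = 1)
    (gam : S → (Fin p → ℝ) → ℝ)
    (hgam_meas : Measurable (Function.uncurry gam))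
    (hgam_nonneg : ∀ x y, 0 ≤ gam x y)
    (hgam_kernel : ∀ x, ∫ y, gam x y ∂θ = 1)
    (m : S → ℝ) (hm_meas : Measurable m) (hm_nonneg : ∀ x, 0 ≤ m x)
    (hm_prob : ∫ x, m x ∂ψ = 1)
    (hm_inv : ∀ᵐ y ∂ψ, m y = ∫ x, lam x y * m x ∂ψ)
    (lamStar lamDiamond : ℝ)
    (hstar_def : lamStar = essSup (fun w : S × S => lam w.1 w.2) (ψ.prod ψ))
    (hstar_bound : ∀ᵐ w ∂(ψ.prod ψ), lam w.1 w.2 ≤ lamStar)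
    (hdiam_def : lamDiamond = ∫ x, essInf (fun y => lam x y) ψ * m x ∂ψ)
    (hdiam_pos : 0 < lamDiamond)
    (ν0 : S → ℝ) (hν0_meas : Measurable ν0) (hν0_nonneg : ∀ x, 0 ≤ ν0 x)
    (hinit : ∀ A : Set S, MeasurableSet A → (μ (X 0 ⁻¹' A)).toReal = ∫ x in A, ν0 x ∂ψ)
    (hmarkov : ∀ n : ℕ, ∀ A : Set S, MeasurableSet A → ∀ B : Set Ω,
      MeasurableSet[(⨆ k ∈ Finset.range (n + 1), MeasurableSpace.comap (X k) inferInstance) ⊔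
        (⨆ k ∈ Finset.Icc 1 n, MeasurableSpace.comap (Y k) inferInstance)] B →
      ∫ ω in B, Set.indicator A (fun _ => (1 : ℝ)) (X (n + 1) ω) ∂μ
        = ∫ ω in B, (∫ y in A, lam (X n ω) y ∂ψ) ∂μ)
    (hobs : ∀ n : ℕ, ∀ A : Set (Fin p → ℝ), MeasurableSet A → ∀ B : Set Ω,
      MeasurableSet[(⨆ k ∈ Finset.range (n + 2), MeasurableSpace.comap (X k) inferInstance) ⊔
        (⨆ k ∈ Finset.Icc 1 n, MeasurableSpace.comap (Y k) inferInstance)] B →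
      ∫ ω in B, Set.indicator A (fun _ => (1 : ℝ)) (Y (n + 1) ω) ∂μ
        = ∫ ω in B, (∫ y in A, gam (X (n + 1) ω) y ∂θ) ∂μ)
    -- f bounded measurable, g the bounded solution of the Poisson equation
    (f : S → ℝ) (hf_meas : Measurable f) (Mf : ℝ) (hMf : ∀ x, |f x| ≤ Mf)
    (g : S → ℝ) (hg_meas : Measurable g) (Mg : ℝ) (hMg : ∀ x, |g x| ≤ Mg)
    (hPoisson : ∀ x, g x = (f x - ∫ z, f z * m z ∂ψ) + ∫ y, g y * lam x y ∂ψ) :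
    let 𝒢 : ℕ → MeasurableSpace Ω :=
      fun n => ⨆ j ∈ Finset.Icc 1 n, MeasurableSpace.comap (Y j) inferInstance
    let π : ℕ → (S → ℝ) → Ω → ℝ := fun k h => μ[fun ω' => h (X k ω') | 𝒢 k]
    let fc : S → ℝ := fun x => f x - ∫ z, f z * m z ∂ψ
    let ξ : ℕ → Ω → ℝ :=
      fun n ω => π n g ω - π (n - 1) g ω + π (n - 1) fc ω
    (∃ b : ℝ, ∀ n : ℕ, 1 ≤ n → ∀ᵐ ω ∂μ, |ξ n ω| ≤ b) ∧
    (∀ n : ℕ, 1 ≤ n → μ[ξ n | 𝒢 (n - 1)] =ᵐ[μ] 0) := by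
  intro 𝒢 π fc ξ
  have h𝒢 : ∀ n, 𝒢 n ≤ ‹MeasurableSpace Ω› := fun n => iSup₂_le fun j _ => (hY j).comap_le
  have h𝒢_mono : ∀ k, 𝒢 k ≤ 𝒢 (k + 1) := fun k =>
    biSup_mono fun j hj => Finset.Icc_subset_Icc_right k.le_succ hj
  have hfc_meas : Measurable fc := hf_meas.sub_const _
  have hfc_bdd : ∀ x, |fc x| ≤ Mf + |∫ z, f z * m z ∂ψ| := fun x =>
    (abs_sub _ _).trans (add_le_add_left (hMf x) _)
  have hg_int : ∀ n, Integrable (fun ω => g (X n ω)) μ := fun n =>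
    Integrable.of_bound (hg_meas.comp (hX n)).aestronglyMeasurable Mg
      (Eventually.of_forall fun ω => hMg _)
  have hfc_int : ∀ n, Integrable (fun ω => fc (X n ω)) μ := fun n =>
    Integrable.of_bound (hfc_meas.comp (hX n)).aestronglyMeasurable _
      (Eventually.of_forall fun ω => hfc_bdd _)
  refine ⟨⟨Mg + Mg + (Mf + |∫ z, f z * m z ∂ψ|), fun n _ => ?_⟩, fun n hn => ?_⟩
  · have hbg : ∀ k, ∀ᵐ ω ∂μ, |π k g ω| ≤ Mg := fun k =>
      ae_bdd_abs_condExp_of_ae_bdd_abs (Eventually.of_forall fun ω => hMg _)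
    have hbf : ∀ k, ∀ᵐ ω ∂μ, |π k fc ω| ≤ Mf + |∫ z, f z * m z ∂ψ| := fun k =>
      ae_bdd_abs_condExp_of_ae_bdd_abs (Eventually.of_forall fun ω => hfc_bdd _)
    filter_upwards [hbg n, hbg (n - 1), hbf (n - 1)] with ω h1 h2 h3
    exact (abs_add_le _ _).trans (add_le_add ((abs_sub _ _).trans (add_le_add h1 h2)) h3)
  · obtain ⟨k, rfl⟩ : ∃ k, n = k + 1 := ⟨n - 1, by omega⟩
    simp only [Nat.add_sub_cancel]
    have hK : ∀ x, g x - fc x = ∫ y, g y * lam x y ∂ψ := fun x => by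
      simp only [fc]; linarith [hPoisson x]
    -- One-step prediction: `E(g (X (k+1)) | 𝒢 k) = E((K g) (X k) | 𝒢 k)` with `K g = g - fc`.
    have hpred : μ[(fun ω => g (X k ω)) - (fun ω => fc (X k ω)) | 𝒢 k]
        =ᵐ[μ] μ[fun ω => g (X (k + 1) ω) | 𝒢 k] := by
      refine ae_eq_condExp_of_forall_setIntegral_eq (h𝒢 k) (hg_int _)
        (fun B _ _ => integrable_condExp.integrableOn) (fun B hB _ => ?_)
        stronglyMeasurable_condExp.aestronglyMeasurable
      rw [setIntegral_condExp (h𝒢 k) ((hg_int k).sub (hfc_int k)) hB]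
      simp only [Pi.sub_apply, hK]
      exact (integral_comp_eq_integral_density (μ.restrict B) ψ lam hlam_meas hlam_nonneg
        hlam_kernel (X k) (X (k + 1)) (hX k) (hX (k + 1))
        (fun A hA => hmarkov k A hA B ((le_sup_right : 𝒢 k ≤ _) B hB)) g hg_meas Mg hMg).symm
    have hsplit := condExp_sub (hg_int k) (hfc_int k) (𝒢 k)
    have htower : μ[π (k + 1) g | 𝒢 k] =ᵐ[μ] μ[fun ω => g (X (k + 1) ω) | 𝒢 k] :=
      condExp_condExp_of_le (h𝒢_mono k) (h𝒢 (k + 1))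
    have hself : ∀ h, μ[π k h | 𝒢 k] = π k h := fun h =>
      condExp_of_stronglyMeasurable (h𝒢 k) stronglyMeasurable_condExp integrable_condExp
    have hadd : μ[ξ (k + 1) | 𝒢 k] =ᵐ[μ] μ[π (k + 1) g - π k g | 𝒢 k] + μ[π k fc | 𝒢 k] :=
      condExp_add (integrable_condExp.sub integrable_condExp) integrable_condExp _
    have hsub : μ[π (k + 1) g - π k g | 𝒢 k] =ᵐ[μ] μ[π (k + 1) g | 𝒢 k] - μ[π k g | 𝒢 k] :=
      condExp_sub integrable_condExp integrable_condExp _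
    rw [hself] at hadd hsub
    filter_upwards [hpred, hsplit, htower, hadd, hsub] with ω h1 h2 h3 h4 h5
    simp only [Pi.add_apply, Pi.sub_apply, Pi.zero_apply] at *
    have h6 : μ[fun ω => g (X k ω) | 𝒢 k] ω = π k g ω := rfl
    have h7 : μ[fun ω => fc (X k ω) | 𝒢 k] ω = π k fc ω := rfl
    linarith
end

section
/- (Formula (4.3).) Under the assumptions of Lemma 4.1, for every bounded measurable f and every n ≥ 1, almost surely (dQ̄_n^ν/dQ̄_n^β)(Y^β) · π_n^{νβ}⟨f⟩ = E( (ν/β)(X_0^β) f(X_n^β) | Y_{[1,n]}^β ). -/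
open MeasureTheory Filter

/-!
Bayes' formula for the filter. Let `a_n(x, y)` be the unnormalized forward filter `fwd` started
from `ν`, where `y = (y₁, …, y_n)`, and let `N_n(y) = ∫ a_n(x, y) ψ(dx)`.

By `lintegral_law`, `a_n` is the density with respect to `ψ × θ^n` of the law of
`(X_n^ν, Y_1^ν, …, Y_n^ν)`. The same lemma applied to the `β`-model with weight `ν/β` at time `0`
gives the same density, because the recursion only sees the product `(ν/β) · β = ν`. Hence, for a
measurable set `D` of observation paths,
`E[(ν/β)(X_0^β) f(X_n^β); Y^β ∈ D] = ∫_D ∫ f(x) a_n(x, y) ψ(dx) θ^n(dy)`.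
The recursive filter is `a_n / N_n` wherever all normalizing constants are finite and `N_n ≠ 0`
(`filter_eq_fwd`), so the inner integral is `N_n(y) h(y)` with `h` the filtered value of `f`.
Finally `N_n θ^n` is the law of `Y^ν`, that is, the likelihood ratio times the law of `Y^β`, and
the right side becomes `E[Z_n h(Y^β); Y^β ∈ D]`, which characterizes the conditional expectation.
The exceptional paths are negligible: `N_k` is `θ^k`-integrable and the law of `Y^β` is absolutely
continuous with respect to `θ^k`, while the likelihood ratio vanishes almost surely on `N_n = 0`.
-/

/-! ### The unnormalized forward filter -/

/-- Unnormalized forward filter: with transition density `l`, observation density `c` and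
initial density `a`, `fwd ψ l c a n y x` is the joint density at `(x, y)` of the `n`-th hidden
state and the first `n` observations. Values are in `[0, ∞]`, so that no integrability is needed. -/
noncomputable def fwd {S E : Type*} [MeasurableSpace S] (ψ : Measure S)
    (l : S → S → ENNReal) (c : S → E → ENNReal) (a : S → ENNReal) :
    ∀ n : ℕ, (Fin n → E) → S → ENNReal
  | 0, _, x => a x
  | n + 1, y, x => c x (y (Fin.last n)) * ∫⁻ z, l z x * fwd ψ l c a n (Fin.init y) z ∂ψ

lemma measurable_fwd {S E : Type*} [MeasurableSpace S] [MeasurableSpace E] (ψ : Measure S)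
    [SFinite ψ] {l : S → S → ENNReal} {c : S → E → ENNReal} {a : S → ENNReal}
    (hl : Measurable (Function.uncurry l)) (hc : Measurable (Function.uncurry c))
    (ha : Measurable a) (n : ℕ) :
    Measurable (fun q : S × (Fin n → E) => fwd ψ l c a n q.2 q.1) := by
  induction n with
  | zero => exact ha.comp measurable_fst
  | succ n ih =>
    have h1 : Measurable (fun q : S × (Fin (n + 1) → E) => c q.1 (q.2 (Fin.last n))) :=
      hc.comp (measurable_fst.prodMk ((measurable_pi_apply _).comp measurable_snd))
    have h2 : Measurable (fun r : (S × (Fin (n + 1) → E)) × S =>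
        l r.2 r.1.1 * fwd ψ l c a n (Fin.init r.1.2) r.2) := by
      have hi : Measurable (fun y : Fin (n + 1) → E => (Fin.init y : Fin n → E)) :=
        measurable_pi_lambda _ fun i => measurable_pi_apply _
      refine (hl.comp (measurable_snd.prodMk (measurable_fst.comp measurable_fst))).mul ?_
      exact ih.comp (measurable_snd.prodMk (hi.comp (measurable_snd.comp measurable_fst)))
    exact h1.mul h2.lintegral_prod_right'

/-! ### Expectations from conditional densities -/

/-- A conditional density prescribed on events determines expectations of nonnegative functions:
if `V` has conditional density `k (W ·)` given `W`, tested against sets, then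
`E G(W, V) = E ∫ k(W, y) G(W, y) θ(dy)`. -/
lemma lintegral_of_condDensity {Ω T E : Type*} [MeasurableSpace Ω] [MeasurableSpace T]
    [MeasurableSpace E] (μ : Measure Ω) [IsProbabilityMeasure μ] (θ : Measure E) [SigmaFinite θ]
    {W : Ω → T} {V : Ω → E} (hW : Measurable W) (hV : Measurable V) {k : T → E → ℝ}
    (hk : Measurable (Function.uncurry k)) (hk0 : ∀ t y, 0 ≤ k t y)
    (hk1 : ∀ t, ∫ y, k t y ∂θ = 1)
    (h : ∀ A : Set E, MeasurableSet A → ∀ C : Set T, MeasurableSet C →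
      ∫ ω in W ⁻¹' C, Set.indicator A (fun _ => (1 : ℝ)) (V ω) ∂μ
        = ∫ ω in W ⁻¹' C, (∫ y in A, k (W ω) y ∂θ) ∂μ)
    {G : T × E → ENNReal} (hG : Measurable G) :
    ∫⁻ ω, G (W ω, V ω) ∂μ = ∫⁻ ω, ∫⁻ y, ENNReal.ofReal (k (W ω) y) * G (W ω, y) ∂θ ∂μ := by
  set κ : ProbabilityTheory.Kernel T E :=
    (ProbabilityTheory.Kernel.const T θ).withDensity (fun t y => ENNReal.ofReal (k t y)) with hκ
  have hk' : Measurable (Function.uncurry fun t y => ENNReal.ofReal (k t y)) := hk.ennreal_ofReal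
  have hkt : ∀ t, Measurable (k t) := fun t => hk.comp measurable_prodMk_left
  have hκt : ∀ t, κ t = θ.withDensity (fun y => ENNReal.ofReal (k t y)) := fun t => by
    rw [hκ, ProbabilityTheory.Kernel.withDensity_apply _ hk', ProbabilityTheory.Kernel.const_apply]
  have hint : ∀ t, Integrable (k t) θ := fun t => by
    by_contra hc
    have := hk1 t
    rw [integral_undef hc] at this
    exact zero_ne_one this
  have hκA : ∀ t (A : Set E), MeasurableSet A → κ t A = ENNReal.ofReal (∫ y in A, k t y ∂θ) :=
    fun t A hA => by
      rw [hκt, withDensity_apply _ hA, ofReal_integral_eq_lintegral_ofReal (hint t).integrableOn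
        (Eventually.of_forall (hk0 t))]
  have : ProbabilityTheory.IsMarkovKernel κ := ⟨fun t => ⟨by
    rw [hκA t _ MeasurableSet.univ, Measure.restrict_univ, hk1, ENNReal.ofReal_one]⟩⟩
  have : IsProbabilityMeasure (μ.map W) := Measure.isProbabilityMeasure_map hW.aemeasurable
  have hWV : Measurable fun ω => (W ω, V ω) := hW.prodMk hV
  have : IsProbabilityMeasure (μ.map fun ω => (W ω, V ω)) :=
    Measure.isProbabilityMeasure_map hWV.aemeasurable
  have key : μ.map (fun ω => (W ω, V ω)) = (μ.map W).compProd κ := by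
    refine Measure.ext_prod fun {C A} hC hA => ?_
    have hκm : Measurable fun t => κ t A := κ.measurable_coe hA
    rw [Measure.compProd_apply_prod hC hA, Measure.map_apply hWV (hC.prod hA),
      setLIntegral_map hC hκm hW]
    have h1 := h A hA C hC
    have h2 : ∫ ω in W ⁻¹' C, Set.indicator A (fun _ => (1 : ℝ)) (V ω) ∂μ
        = (μ ((fun ω => (W ω, V ω)) ⁻¹' (C ×ˢ A))).toReal := by
      have : (fun ω => Set.indicator A (fun _ => (1 : ℝ)) (V ω))
          = Set.indicator (V ⁻¹' A) (fun _ => (1 : ℝ)) := rfl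
      rw [this, integral_indicator_const _ (hV hA), smul_eq_mul, mul_one, measureReal_def,
        Measure.restrict_apply (hV hA), Set.mk_preimage_prod, Set.inter_comm]
    have h3 : ∫ ω in W ⁻¹' C, (∫ y in A, k (W ω) y ∂θ) ∂μ
        = (∫⁻ ω in W ⁻¹' C, κ (W ω) A ∂μ).toReal := by
      rw [← integral_toReal (f := fun ω => κ (W ω) A) (hκm.comp hW).aemeasurable
        (Eventually.of_forall fun ω => measure_lt_top _ _)]
      refine integral_congr_ae (Eventually.of_forall fun ω => ?_)
      simp only [hκA _ A hA]
      rw [ENNReal.toReal_ofReal (integral_nonneg (hk0 _))]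
    rw [h2, h3] at h1
    refine (ENNReal.toReal_eq_toReal_iff' (measure_ne_top _ _) (ne_of_lt ?_)).1 h1
    calc ∫⁻ ω in W ⁻¹' C, κ (W ω) A ∂μ ≤ ∫⁻ ω, 1 ∂μ :=
          (setLIntegral_le_lintegral _ _).trans (lintegral_mono fun ω => prob_le_one)
      _ < ⊤ := by simp
  rw [← lintegral_map hG hWV, key, Measure.lintegral_compProd hG,
    lintegral_map (hG.lintegral_kernel_prod_right') hW]
  refine lintegral_congr fun ω => ?_
  rw [hκt]
  exact lintegral_withDensity_eq_lintegral_mul θ (hkt _).ennreal_ofReal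
    (hG.comp measurable_prodMk_left)

/-! ### Splitting off the last observation -/

lemma lintegral_pi_succ {E : Type*} [MeasurableSpace E] (θ : Measure E) [SigmaFinite θ] (n : ℕ)
    {F : (Fin (n + 1) → E) → ENNReal} (hF : Measurable F) :
    ∫⁻ y, F y ∂(Measure.pi fun _ => θ)
      = ∫⁻ y, ∫⁻ e, F ((MeasurableEquiv.piFinSuccAbove (fun _ => E) (Fin.last n)).symm (e, y)) ∂θ
          ∂(Measure.pi fun _ => θ) := by
  have hmp := measurePreserving_piFinSuccAbove (fun _ : Fin (n + 1) => θ) (Fin.last n)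
  have hF' : Measurable
      (F ∘ (MeasurableEquiv.piFinSuccAbove (fun _ => E) (Fin.last n)).symm) :=
    hF.comp (MeasurableEquiv.measurable _)
  have := hmp.lintegral_comp hF'
  simp only [Function.comp_apply, MeasurableEquiv.symm_apply_apply] at this
  rw [this]
  exact lintegral_prod_symm _ hF'.aemeasurable

lemma piFinSuccAbove_last_symm_eq {E : Type*} [MeasurableSpace E] (n : ℕ) (y : Fin (n + 1) → E) :
    (MeasurableEquiv.piFinSuccAbove (fun _ => E) (Fin.last n)).symm (y (Fin.last n), Fin.init y)
      = y := by
  rw [MeasurableEquiv.symm_apply_eq]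
  refine Prod.ext rfl (funext fun j => ?_)
  simp [MeasurableEquiv.piFinSuccAbove, Fin.init, Fin.insertNthEquiv]

lemma piFinSuccAbove_last_symm_last {E : Type*} [MeasurableSpace E] (n : ℕ) (e : E)
    (y : Fin n → E) :
    (MeasurableEquiv.piFinSuccAbove (fun _ => E) (Fin.last n)).symm (e, y) (Fin.last n) = e := by
  simp [MeasurableEquiv.piFinSuccAbove, Fin.insertNthEquiv]

lemma piFinSuccAbove_last_symm_init {E : Type*} [MeasurableSpace E] (n : ℕ) (e : E)
    (y : Fin n → E) :
    Fin.init ((MeasurableEquiv.piFinSuccAbove (fun _ => E) (Fin.last n)).symm (e, y) :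
      Fin (n + 1) → E) = y := by
  funext j
  simp [MeasurableEquiv.piFinSuccAbove, Fin.init, Fin.insertNthEquiv]

/-! ### Joint law of the hidden state and the observations -/

lemma measurableSet_preimage_triple {Ω S E : Type*} {m : MeasurableSpace Ω} [MeasurableSpace S]
    [MeasurableSpace E] {U V : Ω → S} {n : ℕ} {Y : ℕ → Ω → E} (hU : Measurable U)
    (hV : Measurable V) (hY : ∀ i : Fin n, Measurable (Y (i + 1)))
    {C : Set (S × S × (Fin n → E))} (hC : MeasurableSet C) :
    MeasurableSet ((fun ω => (U ω, V ω, fun i : Fin n => Y (i + 1) ω)) ⁻¹' C) :=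
  (hU.prodMk (hV.prodMk (measurable_pi_lambda _ hY))) hC

/-- The joint law of the `n`-th hidden state and the first `n` observations, when the initial
law is reweighted by `w`: it has density `fwd` started from `w · r`, where `r` is the initial
density. The proof peels off the last observation, then the last transition. -/
lemma lintegral_law {Ω S E : Type*} [MeasurableSpace Ω] [MeasurableSpace S] [MeasurableSpace E]
    (μ : Measure Ω) [IsProbabilityMeasure μ] (ψ : Measure S) [SigmaFinite ψ]
    (θ : Measure E) [SigmaFinite θ] (X : ℕ → Ω → S) (Y : ℕ → Ω → E)
    (hX : ∀ n, Measurable (X n)) (hY : ∀ n, Measurable (Y n))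
    (lam : S → S → ℝ) (hlam_meas : Measurable (Function.uncurry lam))
    (hlam_nonneg : ∀ x y, 0 ≤ lam x y) (hlam_kernel : ∀ x, ∫ y, lam x y ∂ψ = 1)
    (gam : S → E → ℝ) (hgam_meas : Measurable (Function.uncurry gam))
    (hgam_nonneg : ∀ x y, 0 ≤ gam x y) (hgam_kernel : ∀ x, ∫ y, gam x y ∂θ = 1)
    (r : S → ℝ) (hr_meas : Measurable r) (hr_nonneg : ∀ x, 0 ≤ r x) (hr_prob : ∫ x, r x ∂ψ = 1)
    (hinit : ∀ A : Set S, MeasurableSet A → (μ (X 0 ⁻¹' A)).toReal = ∫ x in A, r x ∂ψ)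
    (hmarkov : ∀ n : ℕ, ∀ A : Set S, MeasurableSet A → ∀ B : Set Ω,
      MeasurableSet[(⨆ k ∈ Finset.range (n + 1), MeasurableSpace.comap (X k) inferInstance) ⊔
        (⨆ k ∈ Finset.Icc 1 n, MeasurableSpace.comap (Y k) inferInstance)] B →
      ∫ ω in B, Set.indicator A (fun _ => (1 : ℝ)) (X (n + 1) ω) ∂μ
        = ∫ ω in B, (∫ y in A, lam (X n ω) y ∂ψ) ∂μ)
    (hobs : ∀ n : ℕ, ∀ A : Set E, MeasurableSet A → ∀ B : Set Ω,
      MeasurableSet[(⨆ k ∈ Finset.range (n + 2), MeasurableSpace.comap (X k) inferInstance) ⊔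
        (⨆ k ∈ Finset.Icc 1 n, MeasurableSpace.comap (Y k) inferInstance)] B →
      ∫ ω in B, Set.indicator A (fun _ => (1 : ℝ)) (Y (n + 1) ω) ∂μ
        = ∫ ω in B, (∫ y in A, gam (X (n + 1) ω) y ∂θ) ∂μ)
    (w : S → ENNReal) (hw : Measurable w) (n : ℕ) {G : S × (Fin n → E) → ENNReal}
    (hG : Measurable G) :
    ∫⁻ ω, w (X 0 ω) * G (X n ω, fun i : Fin n => Y (i + 1) ω) ∂μ
      = ∫⁻ q, fwd ψ (fun x y => ENNReal.ofReal (lam x y)) (fun x y => ENNReal.ofReal (gam x y))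
          (fun x => w x * ENNReal.ofReal (r x)) n q.2 q.1 * G q
          ∂(ψ.prod (Measure.pi fun _ => θ)) := by
  set l : S → S → ENNReal := fun x y => ENNReal.ofReal (lam x y) with hl_def
  set c : S → E → ENNReal := fun x y => ENNReal.ofReal (gam x y) with hc_def
  set a : S → ENNReal := fun x => w x * ENNReal.ofReal (r x) with ha_def
  have hl : Measurable (Function.uncurry l) := hlam_meas.ennreal_ofReal
  have hc : Measurable (Function.uncurry c) := hgam_meas.ennreal_ofReal
  have ha : Measurable a := hw.mul hr_meas.ennreal_ofReal
  have hfwd := measurable_fwd (E := E) ψ hl hc ha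
  have hfG : ∀ (n : ℕ) {G : S × (Fin n → E) → ENNReal}, Measurable G →
      Measurable fun q : S × (Fin n → E) => fwd ψ l c a n q.2 q.1 * G q :=
    fun n _ hG => (hfwd n).mul hG
  induction n with
  | zero =>
    have hlaw : μ.map (X 0) = ψ.withDensity (fun x => ENNReal.ofReal (r x)) := by
      have hri : Integrable r ψ := by
        by_contra hcon
        rw [integral_undef hcon] at hr_prob
        exact zero_ne_one hr_prob
      ext A hA
      rw [Measure.map_apply (hX 0) hA, withDensity_apply _ hA,
        ← ofReal_integral_eq_lintegral_ofReal hri.integrableOn (Eventually.of_forall hr_nonneg),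
        ← hinit A hA, ENNReal.ofReal_toReal (measure_ne_top _ _)]
    have e0 : ∀ ω, (fun i : Fin 0 => Y (i + 1) ω) = fun i => isEmptyElim i := fun ω =>
      funext fun i => isEmptyElim i
    have hGm : Measurable fun x => G (x, fun i => isEmptyElim i) :=
      hG.comp (measurable_id.prodMk measurable_const)
    simp only [e0]
    rw [← lintegral_map (f := fun x => w x * G (x, fun i => isEmptyElim i)) (hw.mul hGm) (hX 0),
      hlaw, lintegral_withDensity_eq_lintegral_mul (g := fun x => w x * G (x, fun i => isEmptyElim i))
        _ hr_meas.ennreal_ofReal (hw.mul hGm),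
      lintegral_prod_symm _ (hfG 0 hG).aemeasurable, Measure.pi_of_empty,
      lintegral_dirac' _ (hfG 0 hG).lintegral_prod_left']
    refine lintegral_congr fun x => ?_
    simp only [Pi.mul_apply, fwd, ha_def]
    ring
  | succ n ih =>
    set e := MeasurableEquiv.piFinSuccAbove (fun _ => E) (Fin.last n) with he
    have hem : Measurable e.symm := e.symm.measurable
    -- peel off the observation `Y (n + 1)`
    have hYn : Measurable fun ω => (fun i : Fin n => Y (i + 1) ω) :=
      measurable_pi_lambda _ fun i => hY _
    have step1 : ∫⁻ ω, w (X 0 ω) * G (X (n + 1) ω, fun i : Fin (n + 1) => Y (i + 1) ω) ∂μ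
        = ∫⁻ ω, w (X 0 ω) * ∫⁻ y, c (X (n + 1) ω) y *
            G (X (n + 1) ω, e.symm (y, fun i : Fin n => Y (i + 1) ω)) ∂θ ∂μ := by
      have := lintegral_of_condDensity (T := S × S × (Fin n → E)) μ θ
        (W := fun ω => (X 0 ω, X (n + 1) ω, fun i : Fin n => Y (i + 1) ω)) (V := Y (n + 1))
        ((hX 0).prodMk ((hX _).prodMk hYn)) (hY _) (k := fun t y => gam t.2.1 y)
        (hgam_meas.comp (((measurable_fst.comp measurable_snd).comp measurable_fst).prodMk
          measurable_snd)) (fun t y => hgam_nonneg _ _) (fun t => hgam_kernel _)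
        (fun A hA C hC => hobs n A hA _ ?_)
        (G := fun q => w q.1.1 * G (q.1.2.1, e.symm (q.2, q.1.2.2))) ?_
      · refine Eq.trans (lintegral_congr fun ω => ?_) (this.trans (lintegral_congr fun ω => ?_))
        · have := piFinSuccAbove_last_symm_eq n (fun i : Fin (n + 1) => Y (i + 1) ω)
          rw [← this]
          rfl
        · have hm : Measurable fun y => c (X (n + 1) ω) y *
              G (X (n + 1) ω, e.symm (y, fun i : Fin n => Y (i + 1) ω)) :=
            (hc.comp measurable_prodMk_left).mul (hG.comp (measurable_const.prodMk
              (hem.comp (measurable_id.prodMk measurable_const))))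
          rw [← lintegral_const_mul _ hm]
          refine lintegral_congr fun y => ?_
          simp only [hc_def]
          ring
      · have hx : ∀ j, j < n + 2 → Measurable[(⨆ k ∈ Finset.range (n + 2),
            MeasurableSpace.comap (X k) inferInstance) ⊔
            (⨆ k ∈ Finset.Icc 1 n, MeasurableSpace.comap (Y k) inferInstance)] (X j) := fun j hj =>
          measurable_iff_comap_le.2 (le_sup_of_le_left
            (le_iSup₂_of_le j (Finset.mem_range.2 hj) le_rfl))
        exact measurableSet_preimage_triple (hx 0 (by omega)) (hx (n + 1) (by omega))
          (fun i : Fin n => measurable_iff_comap_le.2 (le_sup_of_le_right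
            (le_iSup₂_of_le (i + 1) (Finset.mem_Icc.2 ⟨by omega, by omega⟩) le_rfl))) hC
      · exact (hw.comp (measurable_fst.comp measurable_fst)).mul (hG.comp
          (((measurable_fst.comp measurable_snd).comp measurable_fst).prodMk (hem.comp
            (measurable_snd.prodMk ((measurable_snd.comp measurable_snd).comp measurable_fst)))))
    -- peel off the transition from `X n` to `X (n + 1)`
    set H : S × (Fin n → E) → ENNReal := fun q => ∫⁻ y, c q.1 y * G (q.1, e.symm (y, q.2)) ∂θ
      with hH_def
    have hcG : Measurable fun s : (S × (Fin n → E)) × E =>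
        c s.1.1 s.2 * G (s.1.1, e.symm (s.2, s.1.2)) :=
      (hc.comp ((measurable_fst.comp measurable_fst).prodMk measurable_snd)).mul (hG.comp
        ((measurable_fst.comp measurable_fst).prodMk (hem.comp
          (measurable_snd.prodMk (measurable_snd.comp measurable_fst)))))
    have hH : Measurable H := hcG.lintegral_prod_right'
    have step2 : ∫⁻ ω, w (X 0 ω) * H (X (n + 1) ω, fun i : Fin n => Y (i + 1) ω) ∂μ
        = ∫⁻ ω, w (X 0 ω) * ∫⁻ x, l (X n ω) x * H (x, fun i : Fin n => Y (i + 1) ω) ∂ψ ∂μ := by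
      have := lintegral_of_condDensity (T := S × S × (Fin n → E)) μ ψ
        (W := fun ω => (X 0 ω, X n ω, fun i : Fin n => Y (i + 1) ω)) (V := X (n + 1))
        ((hX 0).prodMk ((hX _).prodMk hYn)) (hX _) (k := fun t y => lam t.2.1 y)
        (hlam_meas.comp (((measurable_fst.comp measurable_snd).comp measurable_fst).prodMk
          measurable_snd)) (fun t y => hlam_nonneg _ _) (fun t => hlam_kernel _)
        (fun A hA C hC => hmarkov n A hA _ ?_)
        (G := fun q => w q.1.1 * H (q.2, q.1.2.2)) ?_
      · refine this.trans (lintegral_congr fun ω => ?_)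
        have hm : Measurable fun x => l (X n ω) x * H (x, fun i : Fin n => Y (i + 1) ω) :=
          (hl.comp measurable_prodMk_left).mul (hH.comp measurable_prodMk_right)
        rw [← lintegral_const_mul _ hm]
        refine lintegral_congr fun y => ?_
        simp only [hl_def]
        ring
      · have hx : ∀ j, j < n + 1 → Measurable[(⨆ k ∈ Finset.range (n + 1),
            MeasurableSpace.comap (X k) inferInstance) ⊔
            (⨆ k ∈ Finset.Icc 1 n, MeasurableSpace.comap (Y k) inferInstance)] (X j) := fun j hj =>
          measurable_iff_comap_le.2 (le_sup_of_le_left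
            (le_iSup₂_of_le j (Finset.mem_range.2 hj) le_rfl))
        exact measurableSet_preimage_triple (hx 0 (by omega)) (hx n (by omega))
          (fun i : Fin n => measurable_iff_comap_le.2 (le_sup_of_le_right
            (le_iSup₂_of_le (i + 1) (Finset.mem_Icc.2 ⟨by omega, by omega⟩) le_rfl))) hC
      · exact (hw.comp (measurable_fst.comp measurable_fst)).mul (hH.comp
          (measurable_snd.prodMk ((measurable_snd.comp measurable_snd).comp measurable_fst)))
    have hlH : Measurable fun s : (S × (Fin n → E)) × S => l s.1.1 s.2 * H (s.2, s.1.2) :=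
      (hl.comp ((measurable_fst.comp measurable_fst).prodMk measurable_snd)).mul
        (hH.comp (measurable_snd.prodMk (measurable_snd.comp measurable_fst)))
    have step3 := ih (G := fun q => ∫⁻ x, l q.1 x * H (x, q.2) ∂ψ) hlH.lintegral_prod_right'
    rw [step1]
    refine (step2.trans step3).trans ?_
    -- Tonelli on both sides
    have hlH' : Measurable fun q : S × (Fin n → E) => ∫⁻ x, l q.1 x * H (x, q.2) ∂ψ :=
      hlH.lintegral_prod_right'
    rw [lintegral_prod_symm _ (hfG n hlH').aemeasurable,
      lintegral_prod_symm _ (hfG (n + 1) hG).aemeasurable,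
      lintegral_pi_succ θ n (hfG (n + 1) hG).lintegral_prod_left']
    refine lintegral_congr fun y => ?_
    have hfy : Measurable fun z => fwd ψ l c a n y z := (hfwd n).comp measurable_prodMk_right
    set K : S → ENNReal := fun x => ∫⁻ z, l z x * fwd ψ l c a n y z ∂ψ with hK_def
    have hK : Measurable K := by
      have : Measurable fun s : S × S => l s.2 s.1 * fwd ψ l c a n y s.2 :=
        (hl.comp measurable_swap).mul (hfy.comp measurable_snd)
      exact this.lintegral_prod_right'
    have hHy : Measurable fun x => H (x, y) := hH.comp measurable_prodMk_right
    have left : ∫⁻ z, fwd ψ l c a n y z * ∫⁻ x, l z x * H (x, y) ∂ψ ∂ψ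
        = ∫⁻ x, K x * H (x, y) ∂ψ := by
      calc ∫⁻ z, fwd ψ l c a n y z * ∫⁻ x, l z x * H (x, y) ∂ψ ∂ψ
          = ∫⁻ z, ∫⁻ x, fwd ψ l c a n y z * (l z x * H (x, y)) ∂ψ ∂ψ :=
            lintegral_congr fun z => (lintegral_const_mul _
              ((hl.comp measurable_prodMk_left).mul hHy)).symm
        _ = ∫⁻ x, ∫⁻ z, fwd ψ l c a n y z * (l z x * H (x, y)) ∂ψ ∂ψ :=
            lintegral_lintegral_swap (((hfy.comp measurable_fst).mul
              (hl.mul (hHy.comp measurable_snd))).aemeasurable)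
        _ = ∫⁻ x, K x * H (x, y) ∂ψ := by
            refine lintegral_congr fun x => ?_
            have hlf : Measurable fun z => l z x * fwd ψ l c a n y z :=
              (hl.comp measurable_prodMk_right).mul hfy
            simp only [hK_def]
            rw [← lintegral_mul_const _ hlf]
            refine lintegral_congr fun z => ?_
            ring
    have right : ∫⁻ y', ∫⁻ x, fwd ψ l c a (n + 1) (e.symm (y', y)) x * G (x, e.symm (y', y)) ∂ψ ∂θ
        = ∫⁻ x, K x * H (x, y) ∂ψ := by
      have hGy : Measurable fun s : E × S => G (s.2, e.symm (s.1, y)) :=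
        hG.comp (measurable_snd.prodMk (hem.comp (measurable_fst.prodMk measurable_const)))
      calc ∫⁻ y', ∫⁻ x, fwd ψ l c a (n + 1) (e.symm (y', y)) x * G (x, e.symm (y', y)) ∂ψ ∂θ
          = ∫⁻ y', ∫⁻ x, K x * (c x y' * G (x, e.symm (y', y))) ∂ψ ∂θ := by
            refine lintegral_congr fun y' => lintegral_congr fun x => ?_
            simp only [fwd, he, piFinSuccAbove_last_symm_last, piFinSuccAbove_last_symm_init,
              hK_def]
            ring
        _ = ∫⁻ x, ∫⁻ y', K x * (c x y' * G (x, e.symm (y', y))) ∂θ ∂ψ :=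
            lintegral_lintegral_swap (((hK.comp measurable_snd).mul
              ((hc.comp measurable_swap).mul hGy)).aemeasurable)
        _ = ∫⁻ x, K x * H (x, y) ∂ψ :=
            lintegral_congr fun x => lintegral_const_mul _ (hcG.comp
              (measurable_prodMk_left (x := (x, y))))
    exact left.trans right.symm

/-! ### The filter recursion as a normalization -/

/-- The filter recursion is the normalization of `fwd` along every observation path for which all
normalizing constants are finite and the current one is nonzero. Both Bochner integrals in the
recursion equal `toReal` of the corresponding Lebesgue integrals, whether or not the integrands
are integrable, which is why no integrability is needed. -/
lemma filter_eq_fwd {S E : Type*} [MeasurableSpace S] [MeasurableSpace E] (ψ : Measure S)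
    [SigmaFinite ψ] (lam : S → S → ℝ) (hlam_meas : Measurable (Function.uncurry lam))
    (hlam_nonneg : ∀ x y, 0 ≤ lam x y)
    (gam : S → E → ℝ) (hgam_meas : Measurable (Function.uncurry gam))
    (hgam_nonneg : ∀ x y, 0 ≤ gam x y)
    (ν : S → ℝ) (hν_meas : Measurable ν) (hν_nonneg : ∀ x, 0 ≤ ν x) (hν_prob : ∫ x, ν x ∂ψ = 1)
    (y : ℕ → E) (p : ℕ → S → ℝ) (hp0 : p 0 = ν)
    (hp : ∀ n x, p (n + 1) x = gam x (y (n + 1)) * (∫ z, lam z x * p n z ∂ψ) /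
          ∫ u, gam u (y (n + 1)) * (∫ z, lam z u * p n z ∂ψ) ∂ψ)
    (A : ℕ → S → ENNReal)
    (hA : ∀ n, A n = fwd ψ (fun x y => ENNReal.ofReal (lam x y))
      (fun x y => ENNReal.ofReal (gam x y)) (fun x => ENNReal.ofReal (ν x)) n
      (fun i : Fin n => y (i + 1)))
    (hfin : ∀ n, ∫⁻ x, A n x ∂ψ ≠ ⊤) (n : ℕ) (hpos : ∫⁻ x, A n x ∂ψ ≠ 0) (x : S) :
    p n x = (A n x / ∫⁻ u, A n u ∂ψ).toReal := by
  have hmA : ∀ n, Measurable (A n) := fun n => by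
    rw [hA]
    exact (measurable_fwd ψ (l := fun x y => ENNReal.ofReal (lam x y))
      (c := fun x y => ENNReal.ofReal (gam x y)) hlam_meas.ennreal_ofReal hgam_meas.ennreal_ofReal
      hν_meas.ennreal_ofReal n).comp measurable_prodMk_right
  have hsucc : ∀ n x, A (n + 1) x = ENNReal.ofReal (gam x (y (n + 1))) *
      ∫⁻ z, ENNReal.ofReal (lam z x) * A n z ∂ψ := fun n x => by
    rw [hA, hA]
    rfl
  induction n generalizing x with
  | zero =>
    have hri : Integrable ν ψ := by
      by_contra hcon
      rw [integral_undef hcon] at hν_prob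
      exact zero_ne_one hν_prob
    have h0 : ∀ x, A 0 x = ENNReal.ofReal (ν x) := fun x => by rw [hA]; rfl
    simp only [h0]
    rw [← ofReal_integral_eq_lintegral_ofReal hri (Eventually.of_forall hν_nonneg), hν_prob,
      ENNReal.ofReal_one, div_one, ENNReal.toReal_ofReal (hν_nonneg x), hp0]
  | succ n ih =>
    set N := ∫⁻ u, A n u ∂ψ with hN
    have hN0 : N ≠ 0 := by
      intro h
      apply hpos
      have hz : A n =ᵐ[ψ] 0 := (lintegral_eq_zero_iff (hmA n)).1 h
      have : ∀ x, A (n + 1) x = 0 := fun x => by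
        rw [hsucc, (lintegral_eq_zero_iff' ?_).2 ?_, mul_zero]
        · exact ((hlam_meas.comp measurable_prodMk_right).ennreal_ofReal.mul
            (hmA n)).aemeasurable
        · filter_upwards [hz] with z hz
          simp [hz]
      simp [this]
    have ih' := fun x => ih hN0 x
    have hae : ∀ᵐ z ∂ψ, A n z < ⊤ := ae_lt_top (hmA n) (hfin n)
    have hae' : ∀ᵐ z ∂ψ, A (n + 1) z < ⊤ := ae_lt_top (hmA (n + 1)) (hfin (n + 1))
    have inner : ∀ x, ∫ z, lam z x * p n z ∂ψ
        = ((∫⁻ z, ENNReal.ofReal (lam z x) * A n z ∂ψ) / N).toReal := fun x => by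
      have hlx : Measurable fun z => lam z x := hlam_meas.comp measurable_prodMk_right
      have hpm : Measurable (p n) := by
        rw [show p n = fun z => (A n z / N).toReal from funext ih']
        exact ((hmA n).div_const _).ennreal_toReal
      rw [integral_eq_lintegral_of_nonneg_ae (f := fun z => lam z x * p n z) (Eventually.of_forall fun z => by
        simp only [ih', Pi.zero_apply]
        exact mul_nonneg (hlam_nonneg _ _) ENNReal.toReal_nonneg)
        (hlx.mul hpm).aestronglyMeasurable, div_eq_mul_inv,
        ← lintegral_mul_const (f := fun z => ENNReal.ofReal (lam z x) * A n z) _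
          (hlx.ennreal_ofReal.mul (hmA n))]
      congr 1
      refine lintegral_congr_ae ?_
      filter_upwards [hae] with z hz
      rw [ih', ENNReal.ofReal_mul (hlam_nonneg _ _),
        ENNReal.ofReal_toReal (ENNReal.div_ne_top hz.ne hN0), div_eq_mul_inv, mul_assoc]
    have num : ∀ x, gam x (y (n + 1)) * (∫ z, lam z x * p n z ∂ψ)
        = (A (n + 1) x / N).toReal := fun x => by
      rw [inner, hsucc, mul_div_assoc, ENNReal.toReal_mul,
        ENNReal.toReal_ofReal (hgam_nonneg _ _)]
    have den : ∫ u, gam u (y (n + 1)) * (∫ z, lam z u * p n z ∂ψ) ∂ψ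
        = ((∫⁻ u, A (n + 1) u ∂ψ) / N).toReal := by
      simp only [num]
      rw [integral_toReal ((hmA (n + 1)).div_const _).aemeasurable]
      · simp only [div_eq_mul_inv]
        rw [lintegral_mul_const _ (hmA (n + 1))]
      · filter_upwards [hae'] with z hz
        exact ENNReal.div_lt_top hz.ne hN0
    rw [hp, den, num]
    simp only [ENNReal.toReal_div]
    have hNr : N.toReal ≠ 0 := ENNReal.toReal_ne_zero.2 ⟨hN0, hfin n⟩
    rw [div_div_div_cancel_right₀ hNr]

/-! ### Bayes' formula -/

/-- Formula (4.3): (dQ̄ₙ^ν/dQ̄ₙ^β)(Y^β) · πₙ^{νβ}⟨f⟩ = E(ν/β(X₀^β) f(Xₙ^β) | Y_{[1,n]}^β). -/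
theorem formula_4_3
    {Ω : Type*} [MeasurableSpace Ω] (μ : Measure Ω) [IsProbabilityMeasure μ]
    {S : Type*} [MeasurableSpace S] (ψ : Measure S) [SigmaFinite ψ]
    {p : ℕ} (θ : Measure (Fin p → ℝ)) [SigmaFinite θ]
    (Xν Xβ : ℕ → Ω → S) (Yν Yβ : ℕ → Ω → (Fin p → ℝ))
    (hXν : ∀ n, Measurable (Xν n)) (hYν : ∀ n, Measurable (Yν n))
    (hXβ : ∀ n, Measurable (Xβ n)) (hYβ : ∀ n, Measurable (Yβ n))
    (lam : S → S → ℝ)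
    (hlam_meas : Measurable (Function.uncurry lam))
    (hlam_nonneg : ∀ x y, 0 ≤ lam x y)
    (hlam_kernel : ∀ x, ∫ y, lam x y ∂ψ = 1)
    (gam : S → (Fin p → ℝ) → ℝ)
    (hgam_meas : Measurable (Function.uncurry gam))
    (hgam_nonneg : ∀ x y, 0 ≤ gam x y)
    (hgam_kernel : ∀ x, ∫ y, gam x y ∂θ = 1)
    (m : S → ℝ) (hm_meas : Measurable m) (hm_nonneg : ∀ x, 0 ≤ m x)
    (hm_prob : ∫ x, m x ∂ψ = 1)
    (hm_inv : ∀ᵐ y ∂ψ, m y = ∫ x, lam x y * m x ∂ψ)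
    (lamStar lamDiamond : ℝ)
    (hstar_def : lamStar = essSup (fun w : S × S => lam w.1 w.2) (ψ.prod ψ))
    (hstar_bound : ∀ᵐ w ∂(ψ.prod ψ), lam w.1 w.2 ≤ lamStar)
    (hdiam_def : lamDiamond = ∫ x, essInf (fun y => lam x y) ψ * m x ∂ψ)
    (hdiam_pos : 0 < lamDiamond)
    (ν β : S → ℝ) (hν_meas : Measurable ν) (hβ_meas : Measurable β)
    (hν_nonneg : ∀ x, 0 ≤ ν x) (hν_prob : ∫ x, ν x ∂ψ = 1)
    (βstar : ℝ) (hβstar : 0 < βstar) (hβ_lb : ∀ x, βstar ≤ β x)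
    (hβ_prob : ∫ x, β x ∂ψ = 1)
    -- the ν-model
    (hinitν : ∀ A : Set S, MeasurableSet A → (μ (Xν 0 ⁻¹' A)).toReal = ∫ x in A, ν x ∂ψ)
    (hmarkovν : ∀ n : ℕ, ∀ A : Set S, MeasurableSet A → ∀ B : Set Ω,
      MeasurableSet[(⨆ k ∈ Finset.range (n + 1), MeasurableSpace.comap (Xν k) inferInstance) ⊔
        (⨆ k ∈ Finset.Icc 1 n, MeasurableSpace.comap (Yν k) inferInstance)] B →
      ∫ ω in B, Set.indicator A (fun _ => (1 : ℝ)) (Xν (n + 1) ω) ∂μ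
        = ∫ ω in B, (∫ y in A, lam (Xν n ω) y ∂ψ) ∂μ)
    (hobsν : ∀ n : ℕ, ∀ A : Set (Fin p → ℝ), MeasurableSet A → ∀ B : Set Ω,
      MeasurableSet[(⨆ k ∈ Finset.range (n + 2), MeasurableSpace.comap (Xν k) inferInstance) ⊔
        (⨆ k ∈ Finset.Icc 1 n, MeasurableSpace.comap (Yν k) inferInstance)] B →
      ∫ ω in B, Set.indicator A (fun _ => (1 : ℝ)) (Yν (n + 1) ω) ∂μ
        = ∫ ω in B, (∫ y in A, gam (Xν (n + 1) ω) y ∂θ) ∂μ)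
    -- the β-model
    (hinitβ : ∀ A : Set S, MeasurableSet A → (μ (Xβ 0 ⁻¹' A)).toReal = ∫ x in A, β x ∂ψ)
    (hmarkovβ : ∀ n : ℕ, ∀ A : Set S, MeasurableSet A → ∀ B : Set Ω,
      MeasurableSet[(⨆ k ∈ Finset.range (n + 1), MeasurableSpace.comap (Xβ k) inferInstance) ⊔
        (⨆ k ∈ Finset.Icc 1 n, MeasurableSpace.comap (Yβ k) inferInstance)] B →
      ∫ ω in B, Set.indicator A (fun _ => (1 : ℝ)) (Xβ (n + 1) ω) ∂μ
        = ∫ ω in B, (∫ y in A, lam (Xβ n ω) y ∂ψ) ∂μ)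
    (hobsβ : ∀ n : ℕ, ∀ A : Set (Fin p → ℝ), MeasurableSet A → ∀ B : Set Ω,
      MeasurableSet[(⨆ k ∈ Finset.range (n + 2), MeasurableSpace.comap (Xβ k) inferInstance) ⊔
        (⨆ k ∈ Finset.Icc 1 n, MeasurableSpace.comap (Yβ k) inferInstance)] B →
      ∫ ω in B, Set.indicator A (fun _ => (1 : ℝ)) (Yβ (n + 1) ω) ∂μ
        = ∫ ω in B, (∫ y in A, gam (Xβ (n + 1) ω) y ∂θ) ∂μ)
    -- gRN n is the density of the law of (Y₁^ν,…,Yₙ^ν) w.r.t. the law of (Y₁^β,…,Yₙ^β)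
    (gRN : ∀ n : ℕ, (Fin n → (Fin p → ℝ)) → ENNReal)
    (hgRN_meas : ∀ n, Measurable (gRN n))
    (hgRN : ∀ n : ℕ,
      μ.map (fun ω => fun i : Fin n => Yν (i + 1) ω)
        = (μ.map (fun ω => fun i : Fin n => Yβ (i + 1) ω)).withDensity (gRN n))
    -- pν is the ν-initialized filter recursion driven by the observations Y^β,
    -- i.e. the functional φ^ν applied to Y^β
    (pν : ℕ → Ω → S → ℝ)
    (hpν0 : ∀ ω, pν 0 ω = ν)
    (hpν_rec : ∀ n : ℕ, ∀ ω, ∀ x,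
      pν (n + 1) ω x =
        gam x (Yβ (n + 1) ω) * (∫ z, lam z x * pν n ω z ∂ψ) /
          ∫ u, gam u (Yβ (n + 1) ω) * (∫ z, lam z u * pν n ω z ∂ψ) ∂ψ)
    -- pβ is the filter of the β-model (the β-initialized recursion driven by Y^β)
    (pβ : ℕ → Ω → S → ℝ)
    (hpβ0 : ∀ ω, pβ 0 ω = β)
    (hpβ_rec : ∀ n : ℕ, ∀ ω, ∀ x,
      pβ (n + 1) ω x =
        gam x (Yβ (n + 1) ω) * (∫ z, lam z x * pβ n ω z ∂ψ) /
          ∫ u, gam u (Yβ (n + 1) ω) * (∫ z, lam z u * pβ n ω z ∂ψ) ∂ψ) :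
    -- conclusion (4.3): Zₙ · πₙ^{νβ}⟨f⟩ = E(ν/β(X₀^β) f(Xₙ^β) | Y_{[1,n]}^β)  a.s.
    let Z : ℕ → Ω → ℝ := fun n ω => (gRN n (fun i : Fin n => Yβ (i + 1) ω)).toReal
    ∀ f : S → ℝ, Measurable f → (∃ Mf : ℝ, ∀ x, |f x| ≤ Mf) →
    ∀ n : ℕ, 1 ≤ n →
      (fun ω => Z n ω * (if 0 < Z n ω then ∫ x, f x * pν n ω x ∂ψ else 0))
        =ᵐ[μ] μ[fun ω => ν (Xβ 0 ω) / β (Xβ 0 ω) * f (Xβ n ω) |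
          ⨆ j ∈ Finset.Icc 1 n, MeasurableSpace.comap (Yβ j) inferInstance] := by
  intro Z f hf ⟨Mf, hMf⟩ n _
  set l : S → S → ENNReal := fun x y => ENNReal.ofReal (lam x y) with hl_def
  set c : S → (Fin p → ℝ) → ENNReal := fun x y => ENNReal.ofReal (gam x y) with hc_def
  have hl : Measurable (Function.uncurry l) := hlam_meas.ennreal_ofReal
  have hc : Measurable (Function.uncurry c) := hgam_meas.ennreal_ofReal
  have hβ_pos : ∀ x, 0 < β x := fun x => hβstar.trans_le (hβ_lb x)
  set aν : S → ENNReal := fun x => ENNReal.ofReal (ν x) with haν_def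
  set aβ : S → ENNReal := fun x => ENNReal.ofReal (β x) with haβ_def
  have hfν := fun k => measurable_fwd (E := Fin p → ℝ) ψ hl hc hν_meas.ennreal_ofReal k
  have hfβ := fun k => measurable_fwd (E := Fin p → ℝ) ψ hl hc hβ_meas.ennreal_ofReal k
  -- joint laws of `(Xₖ, Y₁, …, Yₖ)`: the `ν`-model, the `β`-model, and the `β`-model reweighted
  -- by `(ν / β)(X₀)`, which has the same law as the `ν`-model
  have lawν : ∀ k {G : S × (Fin k → (Fin p → ℝ)) → ENNReal}, Measurable G →
      ∫⁻ ω, G (Xν k ω, fun i : Fin k => Yν (i + 1) ω) ∂μ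
        = ∫⁻ q, fwd ψ l c aν k q.2 q.1 * G q ∂(ψ.prod (Measure.pi fun _ => θ)) := by
    intro k G hG
    have := lintegral_law μ ψ θ Xν Yν hXν hYν lam hlam_meas hlam_nonneg hlam_kernel gam hgam_meas
      hgam_nonneg hgam_kernel ν hν_meas hν_nonneg hν_prob hinitν hmarkovν hobsν (fun _ => 1)
      measurable_const k hG
    simpa only [one_mul] using this
  have lawβ : ∀ k {G : S × (Fin k → (Fin p → ℝ)) → ENNReal}, Measurable G →
      ∫⁻ ω, G (Xβ k ω, fun i : Fin k => Yβ (i + 1) ω) ∂μ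
        = ∫⁻ q, fwd ψ l c aβ k q.2 q.1 * G q ∂(ψ.prod (Measure.pi fun _ => θ)) := by
    intro k G hG
    have := lintegral_law μ ψ θ Xβ Yβ hXβ hYβ lam hlam_meas hlam_nonneg hlam_kernel gam hgam_meas
      hgam_nonneg hgam_kernel β hβ_meas (fun x => (hβ_pos x).le) hβ_prob hinitβ hmarkovβ hobsβ
      (fun _ => 1) measurable_const k hG
    simpa only [one_mul] using this
  set w : S → ENNReal := fun x => ENNReal.ofReal (ν x / β x) with hw_def
  have hwm : Measurable w := (hν_meas.div hβ_meas).ennreal_ofReal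
  have lawβν : ∀ {G : S × (Fin n → (Fin p → ℝ)) → ENNReal}, Measurable G →
      ∫⁻ ω, w (Xβ 0 ω) * G (Xβ n ω, fun i : Fin n => Yβ (i + 1) ω) ∂μ
        = ∫⁻ q, fwd ψ l c aν n q.2 q.1 * G q ∂(ψ.prod (Measure.pi fun _ => θ)) := by
    intro G hG
    have := lintegral_law μ ψ θ Xβ Yβ hXβ hYβ lam hlam_meas hlam_nonneg hlam_kernel gam hgam_meas
      hgam_nonneg hgam_kernel β hβ_meas (fun x => (hβ_pos x).le) hβ_prob hinitβ hmarkovβ hobsβ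
      w hwm n hG
    have hcancel : (fun x => w x * ENNReal.ofReal (β x)) = aν := funext fun x => by
      simp only [hw_def, haν_def]
      rw [← ENNReal.ofReal_mul (div_nonneg (hν_nonneg x) (hβ_pos x).le),
        div_mul_cancel₀ _ (hβ_pos x).ne']
    rwa [hcancel] at this
  -- the normalizing constants: densities of the observation laws with respect to `θ^k`
  set N : ∀ k, (Fin k → (Fin p → ℝ)) → ENNReal := fun k y => ∫⁻ x, fwd ψ l c aν k y x ∂ψ
    with hN_def
  have hNm : ∀ k, Measurable (N k) := fun k => (hfν k).lintegral_prod_left'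
  have hYβm : ∀ k, Measurable fun ω => (fun i : Fin k => Yβ (i + 1) ω) := fun k =>
    measurable_pi_lambda _ fun i => hYβ _
  have hYνm : ∀ k, Measurable fun ω => (fun i : Fin k => Yν (i + 1) ω) := fun k =>
    measurable_pi_lambda _ fun i => hYν _
  have hac : ∀ k, μ.map (fun ω => (fun i : Fin k => Yβ (i + 1) ω)) ≪ Measure.pi fun _ => θ := by
    intro k
    refine Measure.AbsolutelyContinuous.mk fun D hD hD0 => ?_
    have hG : Measurable fun q : S × (Fin k → (Fin p → ℝ)) =>
        D.indicator (fun _ => (1 : ENNReal)) q.2 :=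
      (measurable_const.indicator hD).comp measurable_snd
    have hfG : Measurable fun q : S × (Fin k → (Fin p → ℝ)) =>
        fwd ψ l c aβ k q.2 q.1 * D.indicator (fun _ => (1 : ENNReal)) q.2 := (hfβ k).mul hG
    have h1 := lawβ k hG
    have h2 : ∫⁻ ω, D.indicator (fun _ => (1 : ENNReal)) (fun i : Fin k => Yβ (i + 1) ω) ∂μ
        = μ.map (fun ω => (fun i : Fin k => Yβ (i + 1) ω)) D := by
      rw [← lintegral_map (measurable_const.indicator hD) (hYβm k), lintegral_indicator hD]
      simp
    rw [← h2]
    refine h1.trans ?_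
    rw [lintegral_prod_symm _ hfG.aemeasurable,
      lintegral_eq_zero_iff' hfG.lintegral_prod_left'.aemeasurable]
    filter_upwards [measure_eq_zero_iff_ae_notMem.1 hD0] with y hy
    simp [hy]
  have hQ : ∀ k, μ.map (fun ω => (fun i : Fin k => Yν (i + 1) ω))
      = (Measure.pi fun _ => θ).withDensity (N k) := by
    intro k
    ext D hD
    have hG : Measurable fun q : S × (Fin k → (Fin p → ℝ)) =>
        D.indicator (fun _ => (1 : ENNReal)) q.2 :=
      (measurable_const.indicator hD).comp measurable_snd
    have hfG : Measurable fun q : S × (Fin k → (Fin p → ℝ)) =>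
        fwd ψ l c aν k q.2 q.1 * D.indicator (fun _ => (1 : ENNReal)) q.2 := (hfν k).mul hG
    have h1 := lawν k hG
    have h2 : ∫⁻ ω, D.indicator (fun _ => (1 : ENNReal)) (fun i : Fin k => Yν (i + 1) ω) ∂μ
        = μ.map (fun ω => (fun i : Fin k => Yν (i + 1) ω)) D := by
      rw [← lintegral_map (measurable_const.indicator hD) (hYνm k), lintegral_indicator hD]
      simp
    rw [← h2, withDensity_apply _ hD, ← lintegral_indicator hD]
    refine h1.trans ?_
    rw [lintegral_prod_symm _ hfG.aemeasurable]
    refine lintegral_congr fun y => ?_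
    by_cases hy : y ∈ D <;> simp [hy, hN_def]
  have hNint : ∀ k, ∫⁻ y, N k y ∂(Measure.pi fun _ => θ) = 1 := by
    intro k
    rw [← setLIntegral_univ, ← withDensity_apply _ MeasurableSet.univ, ← hQ k,
      Measure.map_apply (hYνm k) MeasurableSet.univ]
    simp
  have hNfin : ∀ k, ∀ᵐ y ∂(Measure.pi fun _ => θ), N k y < ⊤ := fun k =>
    ae_lt_top (hNm k) (by rw [hNint k]; exact ENNReal.one_ne_top)
  have hNfinY : ∀ᵐ ω ∂μ, ∀ k, N k (fun i : Fin k => Yβ (i + 1) ω) < ⊤ :=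
    ae_all_iff.2 fun k => ae_of_ae_map (hYβm k).aemeasurable ((hac k).ae_le (hNfin k))
  -- the likelihood ratio vanishes where the normalizing constant does
  have hgN : ∀ᵐ y ∂(μ.map fun ω => (fun i : Fin n => Yβ (i + 1) ω)),
      N n y = 0 → gRN n y = 0 := by
    have hD : MeasurableSet {y | N n y = 0} := hNm n (measurableSet_singleton 0)
    have h1 : ∫⁻ y in {y | N n y = 0}, gRN n y
        ∂(μ.map fun ω => (fun i : Fin n => Yβ (i + 1) ω)) = 0 := by
      rw [← withDensity_apply _ hD, ← hgRN, hQ n, withDensity_apply _ hD,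
        setLIntegral_congr_fun (g := fun _ => 0) hD (fun y hy => hy)]
      simp
    rw [lintegral_eq_zero_iff (hgRN_meas n)] at h1
    exact (ae_restrict_iff' hD).1 h1
  -- the filter as a function of the observation path
  set h : (Fin n → (Fin p → ℝ)) → ℝ := fun y =>
    ∫ x, f x * (fwd ψ l c aν n y x / N n y).toReal ∂ψ with hh_def
  have hhm : Measurable h := by
    have : Measurable fun q : (Fin n → (Fin p → ℝ)) × S =>
        f q.2 * (fwd ψ l c aν n q.1 q.2 / N n q.1).toReal :=
      (hf.comp measurable_snd).mul
        ((((hfν n).comp measurable_swap).div ((hNm n).comp measurable_fst)).ennreal_toReal)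
    exact (this.stronglyMeasurable.integral_prod_right').measurable
  have hLHS : (fun ω => Z n ω * (if 0 < Z n ω then ∫ x, f x * pν n ω x ∂ψ else 0))
      =ᵐ[μ] fun ω => (gRN n (fun i : Fin n => Yβ (i + 1) ω)).toReal *
        h (fun i : Fin n => Yβ (i + 1) ω) := by
    filter_upwards [hNfinY, ae_of_ae_map (hYβm n).aemeasurable hgN] with ω hω1 hω2
    by_cases hZ : 0 < Z n ω
    · have hN0 : N n (fun i : Fin n => Yβ (i + 1) ω) ≠ 0 := fun h0 => by
        have : Z n ω = 0 := by simp only [Z, hω2 h0, ENNReal.toReal_zero]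
        exact hZ.ne' this
      have hfil := filter_eq_fwd ψ lam hlam_meas hlam_nonneg gam hgam_meas hgam_nonneg ν hν_meas
        hν_nonneg hν_prob (fun k => Yβ k ω) (fun k => pν k ω) (hpν0 ω) (fun k x => hpν_rec k ω x)
        (fun k => fwd ψ l c aν k (fun i : Fin k => Yβ (i + 1) ω)) (fun k => rfl)
        (fun k => (hω1 k).ne) n hN0
      rw [if_pos hZ]
      simp only [hfil]
      rfl
    · have hZ0 : (gRN n (fun i : Fin n => Yβ (i + 1) ω)).toReal = 0 :=
        le_antisymm (not_lt.1 hZ) ENNReal.toReal_nonneg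
      rw [if_neg hZ, hZ0, mul_zero, zero_mul]
  refine hLHS.trans ?_
  set P := μ.map (fun ω => (fun i : Fin n => Yβ (i + 1) ω)) with hP_def
  set J := ψ.prod (Measure.pi fun _ : Fin n => θ) with hJ_def
  -- the law of `(Xₙ, Y₁, …, Yₙ)` under the reweighted `β`-model
  set μ' := μ.withDensity (fun ω => w (Xβ 0 ω)) with hμ'_def
  have hw0 : Measurable fun ω => w (Xβ 0 ω) := hwm.comp (hXβ 0)
  have hXY : Measurable fun ω => (Xβ n ω, fun i : Fin n => Yβ (i + 1) ω) :=
    (hXβ n).prodMk (hYβm n)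
  set a : S × (Fin n → (Fin p → ℝ)) → ENNReal := fun q => fwd ψ l c aν n q.2 q.1 with ha_def
  have ham : Measurable a := hfν n
  have hM : μ'.map (fun ω => (Xβ n ω, fun i : Fin n => Yβ (i + 1) ω)) = J.withDensity a := by
    ext D hD
    have hG : Measurable (D.indicator fun _ => (1 : ENNReal)) := measurable_const.indicator hD
    have h1 := lawβν hG
    rw [Measure.map_apply hXY hD, hμ'_def, withDensity_apply _ (hXY hD), withDensity_apply _ hD,
      ← lintegral_indicator hD, ← lintegral_indicator (hXY hD)]
    refine Eq.trans (lintegral_congr fun ω => ?_) (h1.trans (lintegral_congr fun q => ?_))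
    · by_cases hω : (Xβ n ω, fun i : Fin n => Yβ (i + 1) ω) ∈ D <;> simp [Set.indicator, hω]
    · by_cases hq : q ∈ D <;> simp [hq, ha_def]
  have haint : ∫⁻ q, a q ∂J = 1 := by
    rw [hJ_def, lintegral_prod_symm _ ham.aemeasurable]
    exact hNint n
  have hafin : ∀ᵐ q ∂J, a q < ⊤ := ae_lt_top ham (by rw [haint]; exact ENNReal.one_ne_top)
  have : IsFiniteMeasure (J.withDensity a) :=
    isFiniteMeasure_withDensity (by rw [haint]; exact ENNReal.one_ne_top)
  have hfq : Measurable fun q : S × (Fin n → (Fin p → ℝ)) => f q.1 := hf.comp measurable_fst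
  have hfint : Integrable (fun q : S × (Fin n → (Fin p → ℝ)) => f q.1) (J.withDensity a) :=
    Integrable.of_bound hfq.aestronglyMeasurable Mf (Eventually.of_forall fun q => hMf q.1)
  have hFint : Integrable (fun q : S × (Fin n → (Fin p → ℝ)) => (a q).toReal • f q.1) J :=
    (integrable_withDensity_iff_integrable_smul' ham hafin).1 hfint
  have hkint := hFint.integral_prod_right
  have hwfin : ∀ᵐ ω ∂μ, w (Xβ 0 ω) < ⊤ := Eventually.of_forall fun ω => ENNReal.ofReal_lt_top
  have hwr : ∀ ω, (w (Xβ 0 ω)).toReal = ν (Xβ 0 ω) / β (Xβ 0 ω) := fun ω =>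
    ENNReal.toReal_ofReal (div_nonneg (hν_nonneg _) (hβ_pos _).le)
  have hRint : Integrable (fun ω => ν (Xβ 0 ω) / β (Xβ 0 ω) * f (Xβ n ω)) μ := by
    have h1 : Integrable (fun ω => f (Xβ n ω)) μ' := by
      rw [← hM] at hfint
      exact (integrable_map_measure hfq.aestronglyMeasurable hXY.aemeasurable).1 hfint
    have h2 := (integrable_withDensity_iff_integrable_smul' hw0 hwfin).1 h1
    simpa only [hwr, smul_eq_mul] using h2
  have hNk : ∀ᵐ y ∂(Measure.pi fun _ : Fin n => θ),
      ∫ x, (a (x, y)).toReal • f x ∂ψ = (N n y).toReal • h y := by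
    filter_upwards [hNfin n] with y hy
    by_cases hN0 : N n y = 0
    · have hz : (fun x => a (x, y)) =ᵐ[ψ] 0 :=
        (lintegral_eq_zero_iff (ham.comp measurable_prodMk_right)).1 hN0
      rw [hN0, ENNReal.toReal_zero, zero_smul]
      refine integral_eq_zero_of_ae ?_
      filter_upwards [hz] with x hx
      simp only [Pi.zero_apply] at hx ⊢
      rw [hx, ENNReal.toReal_zero, zero_smul]
    · have hNr : (N n y).toReal ≠ 0 := ENNReal.toReal_ne_zero.2 ⟨hN0, hy.ne⟩
      rw [hh_def, smul_eq_mul, ← integral_const_mul]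
      refine integral_congr_ae (Eventually.of_forall fun x => ?_)
      simp only [ENNReal.toReal_div, smul_eq_mul, ha_def]
      field_simp
  have hgfin : ∀ᵐ y ∂P, gRN n y < ⊤ := by
    refine ae_lt_top (hgRN_meas n) ?_
    rw [← setLIntegral_univ, ← withDensity_apply _ MeasurableSet.univ, ← hgRN n,
      Measure.map_apply (hYνm n) MeasurableSet.univ]
    simp
  have hPQ : P.withDensity (gRN n) = (Measure.pi fun _ => θ).withDensity (N n) := by
    rw [← hQ n, hgRN n]
  have hghint : Integrable (fun y => (gRN n y).toReal • h y) P := by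
    rw [← integrable_withDensity_iff_integrable_smul' (hgRN_meas n) hgfin, hPQ,
      integrable_withDensity_iff_integrable_smul' (hNm n) (hNfin n)]
    exact hkint.congr hNk
  have hghm : Measurable fun y => (gRN n y).toReal • h y :=
    (hgRN_meas n).ennreal_toReal.smul hhm
  have hσ : (⨆ j ∈ Finset.Icc 1 n, MeasurableSpace.comap (Yβ j) inferInstance)
      = MeasurableSpace.comap (fun ω => (fun i : Fin n => Yβ (i + 1) ω)) inferInstance := by
    have hpi : MeasurableSpace.comap (fun ω => (fun i : Fin n => Yβ (i + 1) ω)) inferInstance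
        = ⨆ i : Fin n, MeasurableSpace.comap (Yβ (i + 1)) inferInstance := by
      change MeasurableSpace.comap _ MeasurableSpace.pi = _
      simp only [MeasurableSpace.pi, MeasurableSpace.comap_iSup, MeasurableSpace.comap_comp]
      rfl
    rw [hpi]
    refine le_antisymm (iSup₂_le fun j hj => ?_) (iSup_le fun i => ?_)
    · obtain ⟨h1, h2⟩ := Finset.mem_Icc.1 hj
      obtain ⟨j, rfl⟩ := Nat.exists_eq_add_of_le' h1
      exact le_iSup (fun i : Fin n => MeasurableSpace.comap (Yβ (i + 1)) inferInstance)
        ⟨j, by omega⟩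
    · exact le_iSup₂_of_le (i + 1 : ℕ) (Finset.mem_Icc.2 ⟨by omega, by omega⟩) le_rfl
  rw [hσ]
  have hint : Integrable (fun ω => (gRN n (fun i : Fin n => Yβ (i + 1) ω)).toReal *
      h (fun i : Fin n => Yβ (i + 1) ω)) μ :=
    (integrable_map_measure hghm.aestronglyMeasurable (hYβm n).aemeasurable).1 hghint
  refine ae_eq_condExp_of_forall_setIntegral_eq (hYβm n).comap_le hRint
    (fun s _ _ => hint.integrableOn) ?_ ?_
  · rintro _ ⟨D, hD, rfl⟩ _
    have hL : ∫ ω in (fun ω => (fun i : Fin n => Yβ (i + 1) ω)) ⁻¹' D,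
        (gRN n (fun i : Fin n => Yβ (i + 1) ω)).toReal * h (fun i : Fin n => Yβ (i + 1) ω) ∂μ
        = ∫ y in D, (N n y).toReal • h y ∂(Measure.pi fun _ => θ) := by
      rw [← setIntegral_withDensity_eq_setIntegral_toReal_smul (hNm n)
        (ae_restrict_of_ae (hNfin n)) h hD]
      change _ = ∫ y in D, h y ∂((Measure.pi fun _ => θ).withDensity (N n))
      rw [← hPQ]
      change _ = ∫ y in D, h y ∂(P.withDensity fun y => gRN n y)
      rw [setIntegral_withDensity_eq_setIntegral_toReal_smul (hgRN_meas n)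
        (ae_restrict_of_ae hgfin) h hD, hP_def,
        setIntegral_map hD hghm.aestronglyMeasurable (hYβm n).aemeasurable]
      rfl
    have hR : ∫ ω in (fun ω => (fun i : Fin n => Yβ (i + 1) ω)) ⁻¹' D,
        ν (Xβ 0 ω) / β (Xβ 0 ω) * f (Xβ n ω) ∂μ
        = ∫ y in D, ∫ x, (a (x, y)).toReal • f x ∂ψ ∂(Measure.pi fun _ => θ) := by
      have hUD : MeasurableSet ((Set.univ : Set S) ×ˢ D) := MeasurableSet.univ.prod hD
      have hr : J.restrict (Set.univ ×ˢ D) = ψ.prod ((Measure.pi fun _ => θ).restrict D) := by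
        rw [hJ_def, ← Measure.prod_restrict, Measure.restrict_univ]
      have e1 := integral_prod_symm (μ := ψ) (ν := (Measure.pi fun _ : Fin n => θ).restrict D)
        (fun q => (a q).toReal • f q.1) (hr ▸ hFint.restrict)
      rw [← e1, ← hr, ← setIntegral_withDensity_eq_setIntegral_toReal_smul ham
        (ae_restrict_of_ae hafin) (fun q => f q.1) hUD]
      change _ = ∫ q in Set.univ ×ˢ D, f q.1 ∂(J.withDensity a)
      rw [← hM, setIntegral_map hUD hfq.aestronglyMeasurable hXY.aemeasurable]
      have hpre : (fun ω => (Xβ n ω, fun i : Fin n => Yβ (i + 1) ω)) ⁻¹' (Set.univ ×ˢ D)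
          = (fun ω => (fun i : Fin n => Yβ (i + 1) ω)) ⁻¹' D := by
        ext ω; simp
      rw [hpre, hμ'_def, setIntegral_withDensity_eq_setIntegral_toReal_smul hw0
        (ae_restrict_of_ae hwfin) (fun ω => f (Xβ n ω)) (hYβm n hD)]
      simp only [hwr, smul_eq_mul]
    rw [hL, hR]
    exact (integral_congr_ae (ae_restrict_of_ae hNk)).symm
  · exact (hghm.comp (comap_measurable _)).aestronglyMeasurable
end

section
/- (Example 5.1, invariance of the total variation distance.) Let (y_n)_{n≥1} be any sequence in {0,1}, and let (π_n)_{n≥0} and (π̃_n)_{n≥0} be sequences in ℝ⁴ defined from probability vectors π_0 = ν and π̃_0 = β by the recursion π_n(1) = (π_{n−1}(1) + π_{n−1}(4)) y_n, π_n(2) = (π_{n−1}(2) + π_{n−1}(1))(1 − y_n), π_n(3) = (π_{n−1}(3) + π_{n−1}(2)) y_n, π_n(4) = (π_{n−1}(4) + π_{n−1}(3))(1 − y_n), and the same recursion for π̃. Then the ℓ¹-distance is preserved from time 1 on: Σ_{k=1}^4 |π_n(k) − π̃_n(k)| = Σ_{k=1}^4 |π_{n−1}(k) − π̃_{n−1}(k)|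 for every n ≥ 2. -/
/-!
Once an observation has been made, the filter is supported either on the odd states
{1, 3} or on the even states {2, 4} (indices `0, 2` or `1, 3` in `Fin 4`), according to whether
the observation is 1 or 0. From such a vector one step of the recursion never adds two nonzero
entries: it either keeps the two entries in place or moves both to the neighbouring states. So
each step from time 1 on permutes the entries of the filter, by a permutation that depends only on
the observations; both filters undergo the same one, and the ℓ¹-distance is unchanged.
-/

open Finset

/-- Example 5.1: the ℓ¹-distance between the two filters is preserved from time 1 on. -/
theorem example_filter_distance_invariant
    (y : ℕ → ℝ) (hy : ∀ n, y n = 0 ∨ y n = 1)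
    (ν β : Fin 4 → ℝ)
    (hν_nonneg : ∀ k, 0 ≤ ν k) (hν_sum : ∑ k, ν k = 1)
    (hβ_nonneg : ∀ k, 0 ≤ β k) (hβ_sum : ∑ k, β k = 1)
    (π πt : ℕ → Fin 4 → ℝ)
    (hπ0 : π 0 = ν) (hπt0 : πt 0 = β)
    (hπ : ∀ n : ℕ, 1 ≤ n →
      π n 0 = (π (n - 1) 0 + π (n - 1) 3) * y n ∧
      π n 1 = (π (n - 1) 1 + π (n - 1) 0) * (1 - y n) ∧
      π n 2 = (π (n - 1) 2 + π (n - 1) 1) * y n ∧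
      π n 3 = (π (n - 1) 3 + π (n - 1) 2) * (1 - y n))
    (hπt : ∀ n : ℕ, 1 ≤ n →
      πt n 0 = (πt (n - 1) 0 + πt (n - 1) 3) * y n ∧
      πt n 1 = (πt (n - 1) 1 + πt (n - 1) 0) * (1 - y n) ∧
      πt n 2 = (πt (n - 1) 2 + πt (n - 1) 1) * y n ∧
      πt n 3 = (πt (n - 1) 3 + πt (n - 1) 2) * (1 - y n)) :
    ∀ n : ℕ, 2 ≤ n →
      ∑ k, |π n k - πt n k| = ∑ k, |π (n - 1) k - πt (n - 1) k| := by
  intro n hn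
  obtain ⟨m, rfl⟩ : ∃ m, n = m + 2 := ⟨n - 2, by omega⟩
  -- The step into time `m + 1` is what confines both vectors to states of one parity.
  obtain ⟨a0, a1, a2, a3⟩ := hπ (m + 1) (by omega)
  obtain ⟨b0, b1, b2, b3⟩ := hπt (m + 1) (by omega)
  obtain ⟨c0, c1, c2, c3⟩ := hπ (m + 2) (by omega)
  obtain ⟨d0, d1, d2, d3⟩ := hπt (m + 2) (by omega)
  have e : m + 2 - 1 = m + 1 := rfl
  rw [e] at c0 c1 c2 c3 d0 d1 d2 d3 ⊢
  simp only [Fin.sum_univ_four]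
  rw [c0, c1, c2, c3, d0, d1, d2, d3]
  rcases hy (m + 1) with h | h <;> rcases hy (m + 2) with h' | h' <;>
    rw [h] at a0 a1 a2 a3 b0 b1 b2 b3 <;>
    simp only [mul_zero, sub_self, sub_zero, mul_one] at a0 a1 a2 a3 b0 b1 b2 b3 <;>
    simp [h', a0, a1, a2, a3, b0, b1, b2, b3, add_comm]
end

section
/- (Example 5.1, non-stability of the filter.) In the setting of the preceding four-state filtering recursion driven by a {0,1}-valued sequence (y_n), set c₁ = |ν₁ − β₁ + ν₄ − β₄| + |ν₃ − β₃ + ν₂ − β₂| and c₂ = |ν₂ − β₂ + ν₁ − β₁| + |ν₄ − β₄ + ν₃ − β₃|. Then Σ_{k=1}^4 |π_1(k) − π̃_1(k)| = c₁ y₁ + c₂ (1 − y₁), and hence for every n ≥ 1, Σ_{k=1}^4 |π_n(k) − π̃_n(k)| ≥ min(c₁, c₂); in particular, if min(c₁, c₂) > 0 the total variation distance between the two filters never converges to 0. -/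
open Finset

/-!
The update is linear in the filter, so the difference `d n = π n - πt n` obeys the same recursion.
A step with `y = 1` leaves a vector supported on the states `{0, 2}`, and one with `y = 0` a vector
supported on `{1, 3}`. On a vector supported on either pair, every further step merely relocates the
two entries, so the `ℓ¹` norm of `d n` is constant for `n ≥ 1`. Its value at `n = 1`, read off from
the recursion, is `c1` or `c2` according to `y 1`.
-/

/-- One step of the filtering recursion with observation `t` sends the vector `u` to `v`. -/
def FilterStep (t : ℝ) (u v : Fin 4 → ℝ) : Prop :=
  v 0 = (u 0 + u 3) * t ∧ v 1 = (u 1 + u 0) * (1 - t) ∧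
  v 2 = (u 2 + u 1) * t ∧ v 3 = (u 3 + u 2) * (1 - t)

/-- The vector is supported on the states of one observation class: `{0, 2}` or `{1, 3}`. -/
def OneClass (u : Fin 4 → ℝ) : Prop :=
  (u 1 = 0 ∧ u 3 = 0) ∨ (u 0 = 0 ∧ u 2 = 0)

theorem FilterStep.sub {t : ℝ} {u v u' v' : Fin 4 → ℝ}
    (h : FilterStep t u v) (h' : FilterStep t u' v') :
    FilterStep t (fun k => u k - u' k) (fun k => v k - v' k) := by
  obtain ⟨h0, h1, h2, h3⟩ := h
  obtain ⟨h0', h1', h2', h3'⟩ := h'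
  refine ⟨?_, ?_, ?_, ?_⟩ <;> simp only [*] <;> ring

theorem FilterStep.oneClass {t : ℝ} {u v : Fin 4 → ℝ}
    (h : FilterStep t u v) (ht : t = 0 ∨ t = 1) : OneClass v := by
  obtain ⟨h0, h1, h2, h3⟩ := h
  rcases ht with rfl | rfl
  · exact Or.inr (by simp [h0, h2])
  · exact Or.inl (by simp [h1, h3])

theorem FilterStep.sum_abs {t : ℝ} {u v : Fin 4 → ℝ}
    (h : FilterStep t u v) (ht : t = 0 ∨ t = 1) :
    ∑ k, |v k| = (|u 0 + u 3| + |u 2 + u 1|) * t + (|u 1 + u 0| + |u 3 + u 2|) * (1 - t) := by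
  obtain ⟨h0, h1, h2, h3⟩ := h
  rw [Fin.sum_univ_four, h0, h1, h2, h3]
  rcases ht with rfl | rfl <;> simp

/-- Each pair of states merged by a step contains one state of either class, so on a vector
supported on a single class nothing cancels. -/
theorem FilterStep.sum_abs_eq {t : ℝ} {u v : Fin 4 → ℝ}
    (h : FilterStep t u v) (ht : t = 0 ∨ t = 1) (hu : OneClass u) :
    ∑ k, |v k| = ∑ k, |u k| := by
  rw [h.sum_abs ht, Fin.sum_univ_four]
  rcases hu with ⟨e, e'⟩ | ⟨e, e'⟩ <;> simp only [e, e', add_zero, zero_add, abs_zero] <;> ring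

/-- Example 5.1 (non-stability of the filter): ‖π₁ − π̃₁‖ = c₁ y₁ + c₂ (1 − y₁) and
‖πₙ − π̃ₙ‖ ≥ min(c₁, c₂) for all n ≥ 1. -/
theorem example_filter_not_stable
    (y : ℕ → ℝ) (hy : ∀ n, y n = 0 ∨ y n = 1)
    (ν β : Fin 4 → ℝ)
    (hν_nonneg : ∀ k, 0 ≤ ν k) (hν_sum : ∑ k, ν k = 1)
    (hβ_nonneg : ∀ k, 0 ≤ β k) (hβ_sum : ∑ k, β k = 1)
    (π πt : ℕ → Fin 4 → ℝ)
    (hπ0 : π 0 = ν) (hπt0 : πt 0 = β)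
    (hπ : ∀ n : ℕ, 1 ≤ n →
      π n 0 = (π (n - 1) 0 + π (n - 1) 3) * y n ∧
      π n 1 = (π (n - 1) 1 + π (n - 1) 0) * (1 - y n) ∧
      π n 2 = (π (n - 1) 2 + π (n - 1) 1) * y n ∧
      π n 3 = (π (n - 1) 3 + π (n - 1) 2) * (1 - y n))
    (hπt : ∀ n : ℕ, 1 ≤ n →
      πt n 0 = (πt (n - 1) 0 + πt (n - 1) 3) * y n ∧
      πt n 1 = (πt (n - 1) 1 + πt (n - 1) 0) * (1 - y n) ∧
      πt n 2 = (πt (n - 1) 2 + πt (n - 1) 1) * y n ∧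
      πt n 3 = (πt (n - 1) 3 + πt (n - 1) 2) * (1 - y n)) :
    let c1 : ℝ := |ν 0 - β 0 + ν 3 - β 3| + |ν 2 - β 2 + ν 1 - β 1|
    let c2 : ℝ := |ν 1 - β 1 + ν 0 - β 0| + |ν 3 - β 3 + ν 2 - β 2|
    (∑ k, |π 1 k - πt 1 k| = c1 * y 1 + c2 * (1 - y 1)) ∧
    (∀ n : ℕ, 1 ≤ n → min c1 c2 ≤ ∑ k, |π n k - πt n k|) := by
  intro c1 c2
  have step : ∀ n, FilterStep (y (n + 1)) (fun k => π n k - πt n k)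
      (fun k => π (n + 1) k - πt (n + 1) k) := fun n =>
    FilterStep.sub (hπ (n + 1) (Nat.le_add_left 1 n)) (hπt (n + 1) (Nat.le_add_left 1 n))
  have first : ∑ k, |π 1 k - πt 1 k| = c1 * y 1 + c2 * (1 - y 1) := by
    have h := (step 0).sum_abs (hy 1)
    simp only [hπ0, hπt0, zero_add, ← add_sub_assoc] at h
    exact h
  refine ⟨first, fun n hn => ?_⟩
  have const : ∑ k, |π n k - πt n k| = ∑ k, |π 1 k - πt 1 k| := by
    induction n, hn using Nat.le_induction with
    | base => rfl
    | succ n hn ih =>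
      obtain ⟨m, rfl⟩ := Nat.exists_eq_add_of_le' hn
      exact ((step (m + 1)).sum_abs_eq (hy _) ((step m).oneClass (hy _))).trans ih
  rw [const, first]
  rcases hy 1 with h | h <;> simp [h]
end
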